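/- Let n be odd, let Ω ⊂ ℝⁿ be a bounded open convex set with nonempty interior, and let f be a continuous function on the closure of Ω that is positive and subharmonic on Ω (Δf ≥ 0). Then (1/|Ω|) ∫_Ω f dx ≤ (n^{3/2}/|∂Ω|) ∫_{∂Ω} f dσ. -/

import Mathlib

open MeasureTheory

/-- The Laplacian of `f : ℝⁿ → ℝ`, as the sum of the second partial derivatives. -/
noncomputable def laplacian {n : ℕ} (f : EuclideanSpace ℝ (Fin n) → ℝ)
    (x : EuclideanSpace ℝ (Fin n)) : ℝ :=
  ∑ i : Fin n,
    fderiv ℝ (fun y => fderiv ℝ f y (EuclideanSpace.single i (1 : ℝ))) x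
      (EuclideanSpace.single i (1 : ℝ))

/-!
Let `δ` be the distance to `Ωᶜ` and let `r` be its maximum, attained at the origin after a
translation.

By Hahn–Banach and Riesz representation, the maximum principle yields a probability measure on the
sphere against which every subharmonic function satisfies the sub-mean value inequality. The
function `δ` is concave and lies below an affine function with unit gradient at each point of `Ω`.
Testing the inequality at small scales against `G ∘ δ`, where `G` is increasing with second
derivative `r / ε` on `(0, ε)` and `-1` beyond, therefore gives
`∫_Ω f ≤ (1 + r / ε) ∫_{δ < ε} f`.

On the ray through a boundary point `q` with outer normal `ν`, the shell `δ < ε` is asymptotically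
the last fraction `ε / ⟪ν, q⟫`, while the cone measure of `∂Ω` is `(⟪ν, q⟫ / n) dσ`. Letting
`ε → 0` gives `∫_Ω f ≤ r ∫_{∂Ω} f dσ`. Every support value `⟪ν, q⟫` is at least `r`, so
`r |∂Ω| ≤ n |Ω|`, and the two inequalities combine to the constant `n`, which is at most
`n ^ (3 / 2)`.

The formula for the cone measure comes from cutting `∂Ω` into cells with almost constant normal:
the cone over such a cell is almost isometric to the cone over a subset of a hyperplane.
-/

namespace HermiteHadamard

open Set Filter Metric Topology
open scoped ENNReal NNReal

section Laplacian

/-- `f` is differentiable near `x` and its derivative is differentiable at `x`; unlike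
`ContDiffAt ℝ 2 f x`, no continuity of the second derivative is required. -/
structure TwiceDifferentiableAt {E : Type*} [NormedAddCommGroup E] [NormedSpace ℝ E]
    (f : E → ℝ) (x : E) : Prop where
  eventually_differentiableAt : ∀ᶠ y in 𝓝 x, DifferentiableAt ℝ f y
  differentiableAt_fderiv : DifferentiableAt ℝ (fderiv ℝ f) x

section

variable {E : Type*} [NormedAddCommGroup E] [NormedSpace ℝ E] {f g : E → ℝ} {x : E}

lemma TwiceDifferentiableAt.of_contDiff (hf : ContDiff ℝ 2 f) (x : E) :
    TwiceDifferentiableAt f x where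
  eventually_differentiableAt := .of_forall (hf.differentiable two_ne_zero)
  differentiableAt_fderiv :=
    (hf.fderiv_right (m := 1) (by norm_num)).differentiable one_ne_zero x

lemma TwiceDifferentiableAt.fderiv_add_eventuallyEq (hf : TwiceDifferentiableAt f x)
    (hg : TwiceDifferentiableAt g x) :
    fderiv ℝ (fun y => f y + g y) =ᶠ[𝓝 x] fun y => fderiv ℝ f y + fderiv ℝ g y := by
  filter_upwards [hf.eventually_differentiableAt, hg.eventually_differentiableAt] with y hfy hgy
    using fderiv_fun_add hfy hgy

lemma TwiceDifferentiableAt.add (hf : TwiceDifferentiableAt f x)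
    (hg : TwiceDifferentiableAt g x) : TwiceDifferentiableAt (fun y => f y + g y) x where
  eventually_differentiableAt := by
    filter_upwards [hf.eventually_differentiableAt, hg.eventually_differentiableAt] with y hfy hgy
      using hfy.add hgy
  differentiableAt_fderiv :=
    (hf.differentiableAt_fderiv.add hg.differentiableAt_fderiv).congr_of_eventuallyEq
      (hf.fderiv_add_eventuallyEq hg)

lemma fderiv_comp_add_smul (a : E) (s : ℝ) {y : E} (hf : DifferentiableAt ℝ f (a + s • y)) :
    fderiv ℝ (fun z => f (a + s • z)) y = s • fderiv ℝ f (a + s • y) := by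
  have haffine : HasFDerivAt (fun z : E => a + s • z) (s • ContinuousLinearMap.id ℝ E) y :=
    ((hasFDerivAt_id y).const_smul s).const_add a
  refine (hf.hasFDerivAt.comp y haffine).fderiv.trans ?_
  ext v
  simp

lemma TwiceDifferentiableAt.fderiv_comp_add_smul_eventuallyEq (a : E) (s : ℝ)
    (hf : TwiceDifferentiableAt f (a + s • x)) :
    fderiv ℝ (fun z => f (a + s • z)) =ᶠ[𝓝 x] fun y => s • fderiv ℝ f (a + s • y) := by
  have haffine : Tendsto (fun z : E => a + s • z) (𝓝 x) (𝓝 (a + s • x)) :=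
    Continuous.tendsto (by fun_prop) x
  filter_upwards [haffine.eventually hf.eventually_differentiableAt] with y hy
    using fderiv_comp_add_smul a s hy

lemma TwiceDifferentiableAt.hasFDerivAt_fderiv_comp_add_smul (a : E) (s : ℝ)
    (hf : TwiceDifferentiableAt f (a + s • x)) :
    HasFDerivAt (fderiv ℝ fun z => f (a + s • z))
      (s ^ 2 • fderiv ℝ (fderiv ℝ f) (a + s • x)) x := by
  have haffine : HasFDerivAt (fun z : E => a + s • z) (s • ContinuousLinearMap.id ℝ E) x :=
    ((hasFDerivAt_id x).const_smul s).const_add a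
  have hcomp := (hf.differentiableAt_fderiv.hasFDerivAt.comp x haffine).const_smul s
  refine (hcomp.congr_of_eventuallyEq
    (hf.fderiv_comp_add_smul_eventuallyEq a s)).congr_fderiv ?_
  ext v w
  simp [pow_two, mul_assoc]

lemma TwiceDifferentiableAt.comp_add_smul (a : E) (s : ℝ)
    (hf : TwiceDifferentiableAt f (a + s • x)) :
    TwiceDifferentiableAt (fun z => f (a + s • z)) x where
  eventually_differentiableAt := by
    have haffine : Tendsto (fun z : E => a + s • z) (𝓝 x) (𝓝 (a + s • x)) :=
      Continuous.tendsto (by fun_prop) x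
    filter_upwards [haffine.eventually hf.eventually_differentiableAt] with y hy
      using hy.fun_comp' y (by fun_prop)
  differentiableAt_fderiv := (hf.hasFDerivAt_fderiv_comp_add_smul a s).differentiableAt

lemma TwiceDifferentiableAt.const_mul (c : ℝ) (hf : TwiceDifferentiableAt f x) :
    TwiceDifferentiableAt (fun y => c * f y) x where
  eventually_differentiableAt := hf.eventually_differentiableAt.mono fun _ hy => hy.const_mul c
  differentiableAt_fderiv := by
    have hfderiv : fderiv ℝ (fun y => c * f y) = c • fderiv ℝ f := fderiv_const_smul_field c
    exact hfderiv ▸ hf.differentiableAt_fderiv.const_smul c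

lemma deriv_deriv_nonpos_of_isLocalMax {φ : ℝ → ℝ} {t : ℝ} (hφ : IsLocalMax φ t)
    (hc : ContinuousAt φ t) : deriv (deriv φ) t ≤ 0 := by
  by_contra! hpos
  have hmin : IsLocalMin φ t := isLocalMin_of_deriv_deriv_pos hpos hφ.deriv_eq_zero hc
  have hconst : φ =ᶠ[𝓝 t] fun _ => φ t := by
    filter_upwards [hφ, hmin] with y hle hge using le_antisymm hle hge
  simp [hconst.deriv.deriv_eq] at hpos

lemma TwiceDifferentiableAt.fderiv_fderiv_nonpos_of_isLocalMax (hf : TwiceDifferentiableAt f x)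
    (hmax : IsLocalMax f x) (v : E) : fderiv ℝ (fderiv ℝ f) x v v ≤ 0 := by
  have hline : ∀ t : ℝ, HasDerivAt (fun t : ℝ => x + t • v) v t := fun t => by
    simpa using ((hasDerivAt_id t).smul_const v).const_add x
  have htendsto : Tendsto (fun t : ℝ => x + t • v) (𝓝 0) (𝓝 x) := by
    simpa using (hline 0).continuousAt.tendsto
  have hderiv : deriv (fun t : ℝ => f (x + t • v)) =ᶠ[𝓝 0] fun t => fderiv ℝ f (x + t • v) v := by
    filter_upwards [htendsto.eventually hf.eventually_differentiableAt] with t ht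
      using (ht.hasFDerivAt.comp_hasDerivAt t (hline t)).deriv
  have hderiv₂ : HasDerivAt (fun t : ℝ => fderiv ℝ f (x + t • v) v)
      (fderiv ℝ (fderiv ℝ f) x v v) 0 := by
    have h : HasFDerivAt (fderiv ℝ f) (fderiv ℝ (fderiv ℝ f) x) (x + (0 : ℝ) • v) := by
      simpa using hf.differentiableAt_fderiv.hasFDerivAt
    exact (ContinuousLinearMap.apply ℝ ℝ v).hasFDerivAt.comp_hasDerivAt _
      (h.comp_hasDerivAt 0 (hline 0))
  rw [← hderiv₂.deriv, ← hderiv.deriv_eq]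
  refine deriv_deriv_nonpos_of_isLocalMax ?_ ?_
  · filter_upwards [htendsto.eventually hmax] with t ht
    simpa using ht
  · refine ContinuousAt.comp (f := fun t : ℝ => x + t • v) ?_ (hline 0).continuousAt
    simpa using hf.eventually_differentiableAt.self_of_nhds.continuousAt

end

variable {n : ℕ} {f g : EuclideanSpace ℝ (Fin n) → ℝ} {x : EuclideanSpace ℝ (Fin n)}
  {U V : Set (EuclideanSpace ℝ (Fin n))}

lemma laplacian_eq_sum_fderiv_fderiv (hf : DifferentiableAt ℝ (fderiv ℝ f) x) :
    laplacian f x = ∑ i : Fin n, fderiv ℝ (fderiv ℝ f) x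
      (EuclideanSpace.single i 1) (EuclideanSpace.single i 1) := by
  refine Finset.sum_congr rfl fun i _ => ?_
  simp [fderiv_clm_apply hf (differentiableAt_const _)]

lemma laplacian_add (hf : TwiceDifferentiableAt f x) (hg : TwiceDifferentiableAt g x) :
    laplacian (fun y => f y + g y) x = laplacian f x + laplacian g x := by
  rw [laplacian_eq_sum_fderiv_fderiv (hf.add hg).differentiableAt_fderiv,
    laplacian_eq_sum_fderiv_fderiv hf.differentiableAt_fderiv,
    laplacian_eq_sum_fderiv_fderiv hg.differentiableAt_fderiv,
    (hf.fderiv_add_eventuallyEq hg).fderiv_eq,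
    fderiv_fun_add hf.differentiableAt_fderiv hg.differentiableAt_fderiv]
  simp [Finset.sum_add_distrib]

lemma laplacian_const_mul (c : ℝ) (hf : TwiceDifferentiableAt f x) :
    laplacian (fun y => c * f y) x = c * laplacian f x := by
  have hfderiv : fderiv ℝ (fun y => c * f y) = c • fderiv ℝ f := fderiv_const_smul_field c
  rw [laplacian_eq_sum_fderiv_fderiv (hf.const_mul c).differentiableAt_fderiv,
    laplacian_eq_sum_fderiv_fderiv hf.differentiableAt_fderiv, hfderiv,
    fderiv_const_smul hf.differentiableAt_fderiv, Finset.mul_sum]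
  simp

lemma laplacian_comp_add_smul (a : EuclideanSpace ℝ (Fin n)) (s : ℝ)
    (hf : TwiceDifferentiableAt f (a + s • x)) :
    laplacian (fun y => f (a + s • y)) x = s ^ 2 * laplacian f (a + s • x) := by
  rw [laplacian_eq_sum_fderiv_fderiv (hf.comp_add_smul a s).differentiableAt_fderiv,
    laplacian_eq_sum_fderiv_fderiv hf.differentiableAt_fderiv,
    (hf.hasFDerivAt_fderiv_comp_add_smul a s).fderiv, Finset.mul_sum]
  simp

lemma laplacian_continuousLinearMap (L : EuclideanSpace ℝ (Fin n) →L[ℝ] ℝ)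
    (x : EuclideanSpace ℝ (Fin n)) : laplacian L x = 0 := by
  simp [laplacian]

lemma laplacian_inner_apply_self
    (A : EuclideanSpace ℝ (Fin n) →L[ℝ] EuclideanSpace ℝ (Fin n))
    (x : EuclideanSpace ℝ (Fin n)) :
    laplacian (fun y => inner ℝ (A y) y) x = 2 * ∑ i, A (EuclideanSpace.single i 1) i := by
  have hfderiv : ∀ v, (fun y => fderiv ℝ (fun y => inner ℝ (A y) y) y v) =
      ⇑(innerSL ℝ (A v) + (innerSL ℝ v).comp A) := fun v => by
    funext y
    have hA : HasFDerivAt (fun y => inner ℝ (A y) y) _ y := A.hasFDerivAt.inner ℝ (hasFDerivAt_id y)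
    rw [hA.fderiv]
    simp [add_comm, real_inner_comm]
  simp only [laplacian, hfderiv, ContinuousLinearMap.fderiv]
  simp [two_mul, Finset.sum_add_distrib, EuclideanSpace.inner_single_left,
    EuclideanSpace.inner_single_right]

lemma laplacian_nonpos_of_isLocalMax (hf : TwiceDifferentiableAt f x) (hmax : IsLocalMax f x) :
    laplacian f x ≤ 0 := by
  rw [laplacian_eq_sum_fderiv_fderiv hf.differentiableAt_fderiv]
  exact Finset.sum_nonpos fun i _ => hf.fderiv_fderiv_nonpos_of_isLocalMax hmax _

/-- `f` is twice differentiable on `U` with nonnegative Laplacian there. -/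
structure IsSubharmonicOn (f : EuclideanSpace ℝ (Fin n) → ℝ)
    (U : Set (EuclideanSpace ℝ (Fin n))) : Prop where
  twiceDifferentiableAt : ∀ x ∈ U, TwiceDifferentiableAt f x
  laplacian_nonneg : ∀ x ∈ U, 0 ≤ laplacian f x

lemma IsSubharmonicOn.mono (hf : IsSubharmonicOn f U) (hVU : V ⊆ U) : IsSubharmonicOn f V :=
  ⟨fun x hx => hf.twiceDifferentiableAt x (hVU hx), fun x hx => hf.laplacian_nonneg x (hVU hx)⟩

lemma IsSubharmonicOn.add (hf : IsSubharmonicOn f U) (hg : IsSubharmonicOn g U) :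
    IsSubharmonicOn (fun y => f y + g y) U where
  twiceDifferentiableAt x hx := (hf.twiceDifferentiableAt x hx).add (hg.twiceDifferentiableAt x hx)
  laplacian_nonneg x hx := by
    rw [laplacian_add (hf.twiceDifferentiableAt x hx) (hg.twiceDifferentiableAt x hx)]
    exact add_nonneg (hf.laplacian_nonneg x hx) (hg.laplacian_nonneg x hx)

lemma IsSubharmonicOn.const_mul {c : ℝ} (hc : 0 ≤ c) (hf : IsSubharmonicOn f U) :
    IsSubharmonicOn (fun y => c * f y) U where
  twiceDifferentiableAt x hx := (hf.twiceDifferentiableAt x hx).const_mul c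
  laplacian_nonneg x hx := by
    rw [laplacian_const_mul c (hf.twiceDifferentiableAt x hx)]
    exact mul_nonneg hc (hf.laplacian_nonneg x hx)

lemma IsSubharmonicOn.comp_add_smul (a : EuclideanSpace ℝ (Fin n)) (s : ℝ)
    (hf : IsSubharmonicOn f U) :
    IsSubharmonicOn (fun y => f (a + s • y)) ((fun y => a + s • y) ⁻¹' U) where
  twiceDifferentiableAt x hx := (hf.twiceDifferentiableAt _ hx).comp_add_smul a s
  laplacian_nonneg x hx := by
    rw [laplacian_comp_add_smul a s (hf.twiceDifferentiableAt _ hx)]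
    exact mul_nonneg (sq_nonneg s) (hf.laplacian_nonneg _ hx)

lemma isSubharmonicOn_const (c : ℝ) (U : Set (EuclideanSpace ℝ (Fin n))) :
    IsSubharmonicOn (fun _ => c) U where
  twiceDifferentiableAt x _ := .of_contDiff contDiff_const x
  laplacian_nonneg x _ := by simp [laplacian]

lemma isSubharmonicOn_continuousLinearMap (L : EuclideanSpace ℝ (Fin n) →L[ℝ] ℝ)
    (U : Set (EuclideanSpace ℝ (Fin n))) : IsSubharmonicOn L U where
  twiceDifferentiableAt x _ := .of_contDiff L.contDiff x
  laplacian_nonneg x _ := (laplacian_continuousLinearMap L x).ge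

lemma isSubharmonicOn_inner_apply_self
    {A : EuclideanSpace ℝ (Fin n) →L[ℝ] EuclideanSpace ℝ (Fin n)}
    (hA : 0 ≤ ∑ i, A (EuclideanSpace.single i 1) i) (U : Set (EuclideanSpace ℝ (Fin n))) :
    IsSubharmonicOn (fun y => inner ℝ (A y) y) U where
  twiceDifferentiableAt x _ := .of_contDiff (A.contDiff.inner ℝ contDiff_id) x
  laplacian_nonneg x _ := by
    rw [laplacian_inner_apply_self]
    positivity

lemma IsSubharmonicOn.not_isLocalMax_add_norm_sq (hn : 0 < n) (hf : IsSubharmonicOn f U)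
    (hx : x ∈ U) {ε : ℝ} (hε : 0 < ε) : ¬ IsLocalMax (fun y => f y + ε * ‖y‖ ^ 2) x := by
  intro hmax
  have hsq : (fun y : EuclideanSpace ℝ (Fin n) => ε * ‖y‖ ^ 2) =
      fun y => inner ℝ ((ε • ContinuousLinearMap.id ℝ (EuclideanSpace ℝ (Fin n))) y) y := by
    funext y
    simp [inner_smul_left]
  have hsq₂ : TwiceDifferentiableAt (fun y : EuclideanSpace ℝ (Fin n) => ε * ‖y‖ ^ 2) x :=
    .of_contDiff (contDiff_const.mul (contDiff_norm_sq ℝ)) x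
  have hle := laplacian_nonpos_of_isLocalMax ((hf.twiceDifferentiableAt x hx).add hsq₂) hmax
  rw [laplacian_add (hf.twiceDifferentiableAt x hx) hsq₂, hsq, laplacian_inner_apply_self] at hle
  have hnonneg := hf.laplacian_nonneg x hx
  have hpos : 0 < n * ε := by positivity
  simp only [smul_apply, ContinuousLinearMap.id_apply, PiLp.smul_apply, smul_eq_mul,
    PiLp.single_apply, if_true, mul_one, Finset.sum_const, Finset.card_fin, nsmul_eq_mul] at hle
  linarith

-- Perturbing by `ε‖·‖²` makes the Laplacian positive, which excludes interior maxima.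
lemma IsSubharmonicOn.le_of_forall_frontier_le (hn : 0 < n) (hU : IsOpen U)
    (hUb : Bornology.IsBounded U) (hc : ContinuousOn f (closure U)) (hf : IsSubharmonicOn f U)
    {c : ℝ} (hfc : ∀ y ∈ frontier U, f y ≤ c) (hx : x ∈ U) : f x ≤ c := by
  obtain ⟨R, hR⟩ := hUb.closure.exists_norm_le
  refine le_of_forall_pos_le_add fun δ hδ => ?_
  obtain ⟨ε, hε, hεδ⟩ : ∃ ε > 0, ε * R ^ 2 ≤ δ :=
    ⟨δ / (R ^ 2 + 1), by positivity, by rw [div_mul_eq_mul_div, div_le_iff₀] <;> nlinarith⟩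
  obtain ⟨z, hz, hmax⟩ := hUb.isCompact_closure.exists_isMaxOn ⟨x, subset_closure hx⟩
    (hc.add (g := fun y => ε * ‖y‖ ^ 2) (by fun_prop))
  have hzU : z ∉ U := fun hzU => hf.not_isLocalMax_add_norm_sq hn hzU hε
    (hmax.isLocalMax (mem_of_superset (hU.mem_nhds hzU) subset_closure))
  have hzc : f z ≤ c := hfc z (hU.frontier_eq ▸ ⟨hz, hzU⟩)
  have hzR : ε * ‖z‖ ^ 2 ≤ ε * R ^ 2 := by gcongr; exact hR z hz
  calc f x ≤ f x + ε * ‖x‖ ^ 2 := le_add_of_nonneg_right (by positivity)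
    _ ≤ f z + ε * ‖z‖ ^ 2 := hmax (subset_closure hx)
    _ ≤ c + δ := by linarith

end Laplacian

section JensenMeasure

open scoped CompactlySupported

lemma exists_linearMap_nonneg_of_forall_smul_mem {V : Type*} [AddCommGroup V] [Module ℝ V]
    (K : PointedCone ℝ V) (e : V) (hpos : ∀ c : ℝ, c • e ∈ K → 0 ≤ c)
    (hdense : ∀ v, ∃ c : ℝ, c • e + v ∈ K) :
    ∃ g : V →ₗ[ℝ] ℝ, g e = 1 ∧ ∀ v ∈ K, 0 ≤ g v := by
  have he : e ≠ 0 := by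
    rintro rfl
    linarith [hpos (-1) (by simp)]
  let p : V →ₗ.[ℝ] ℝ := LinearPMap.mkSpanSingleton e (1 : ℝ) he
  have hp : ∀ (c : ℝ) (h : c • e ∈ p.domain), p ⟨c • e, h⟩ = c := fun c h => by
    simpa [p, LinearPMap.mkSpanSingleton] using
      LinearPMap.mkSpanSingleton'_apply (σ := RingHom.id ℝ) e (1 : ℝ) _ c h
  obtain ⟨g, hgp, hgK⟩ := riesz_extension K p
    (by
      rintro ⟨v, hv⟩ hvK
      obtain ⟨c, rfl⟩ := Submodule.mem_span_singleton.mp hv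
      exact (hp c hv).symm ▸ hpos c hvK)
    (fun v => (hdense v).imp' (fun c => ⟨c • e, Submodule.mem_span_singleton.mpr ⟨c, rfl⟩⟩)
      fun _ hc => hc)
  refine ⟨g, ?_, hgK⟩
  simpa using (hgp ⟨(1 : ℝ) • e, Submodule.mem_span_singleton.mpr ⟨1, rfl⟩⟩).trans (hp 1 _)

lemma exists_isProbabilityMeasure_integral_eq {X : Type*} [TopologicalSpace X] [CompactSpace X]
    [T2Space X] [MeasurableSpace X] [BorelSpace X] (g : C(X, ℝ) →ₗ[ℝ] ℝ)
    (hg : ∀ φ, 0 ≤ φ → 0 ≤ g φ) (hg_one : g 1 = 1) :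
    ∃ μ : Measure X, IsProbabilityMeasure μ ∧ ∀ φ : C(X, ℝ), ∫ x, φ x ∂μ = g φ := by
  let Λ : C_c(X, ℝ) →ₚ[ℝ] ℝ := PositiveLinearMap.mk₀
    { toFun φ := g φ.toContinuousMap
      map_add' φ ψ := map_add g φ.toContinuousMap ψ.toContinuousMap
      map_smul' c φ := map_smul g c φ.toContinuousMap } fun φ hφ => hg _ hφ
  have hΛ : ∀ φ : C(X, ℝ), ∫ x, φ x ∂(RealRMK.rieszMeasure Λ) = g φ := fun φ =>
    RealRMK.integral_rieszMeasure Λ (CompactlySupportedContinuousMap.continuousMapEquiv φ)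
  refine ⟨RealRMK.rieszMeasure Λ, ⟨?_⟩, hΛ⟩
  simpa [Measure.real, hg_one, ENNReal.toReal_eq_one_iff] using hΛ 1

variable {n : ℕ}

/-- A probability measure on the unit sphere of `ℝⁿ` against which the sub-mean value inequality
at the centre holds for every function that is continuous on the closed unit ball and subharmonic
inside. It replaces the uniform measure of the sphere. -/
structure IsJensenMeasure (μ : Measure (sphere (0 : EuclideanSpace ℝ (Fin n)) 1)) : Prop
    extends IsProbabilityMeasure μ where
  apply_zero_le_integral : ∀ F : EuclideanSpace ℝ (Fin n) → ℝ, ContinuousOn F (closedBall 0 1) →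
    IsSubharmonicOn F (ball 0 1) → F 0 ≤ ∫ w, F w ∂μ

/-- The boundary functions on the unit sphere that dominate a subharmonic function of the unit
ball whose value at the centre is nonnegative. -/
def subharmonicMajorantCone (n : ℕ) :
    PointedCone ℝ C(sphere (0 : EuclideanSpace ℝ (Fin n)) 1, ℝ) where
  carrier := {φ | ∃ F : EuclideanSpace ℝ (Fin n) → ℝ, ContinuousOn F (closedBall 0 1) ∧
    IsSubharmonicOn F (ball 0 1) ∧ 0 ≤ F 0 ∧ ∀ w : sphere (0 : EuclideanSpace ℝ (Fin n)) 1,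
      F w ≤ φ w}
  add_mem' := by
    rintro φ ψ ⟨F, hFc, hF, hF0, hFφ⟩ ⟨G, hGc, hG, hG0, hGψ⟩
    exact ⟨fun z => F z + G z, hFc.add hGc, hF.add hG, add_nonneg hF0 hG0,
      fun w => add_le_add (hFφ w) (hGψ w)⟩
  zero_mem' := ⟨0, continuousOn_const, isSubharmonicOn_continuousLinearMap 0 _, le_rfl,
    fun _ => le_rfl⟩
  smul_mem' := by
    rintro ⟨c, hc⟩ φ ⟨F, hFc, hF, hF0, hFφ⟩
    exact ⟨fun z => c * F z, continuousOn_const.mul hFc, hF.const_mul hc, mul_nonneg hc hF0,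
      fun w => mul_le_mul_of_nonneg_left (hFφ w) hc⟩

lemma nonneg_of_smul_one_mem_subharmonicMajorantCone (hn : 0 < n) {c : ℝ}
    (hc : c • (1 : C(sphere (0 : EuclideanSpace ℝ (Fin n)) 1, ℝ)) ∈ subharmonicMajorantCone n) :
    0 ≤ c := by
  obtain ⟨F, hFc, hF, hF0, hFφ⟩ := hc
  refine hF0.trans (hF.le_of_forall_frontier_le hn isOpen_ball isBounded_ball ?_ (fun y hy => ?_)
    (mem_ball_self one_pos))
  · rwa [closure_ball _ one_ne_zero]
  · rw [frontier_ball _ one_ne_zero] at hy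
    simpa using hFφ ⟨y, hy⟩

lemma mem_subharmonicMajorantCone_of_nonneg
    {φ : C(sphere (0 : EuclideanSpace ℝ (Fin n)) 1, ℝ)} (hφ : 0 ≤ φ) :
    φ ∈ subharmonicMajorantCone n :=
  ⟨fun _ => 0, continuousOn_const, isSubharmonicOn_const 0 _, le_rfl, fun w => hφ w⟩

lemma exists_isJensenMeasure (hn : 0 < n) :
    ∃ μ : Measure (sphere (0 : EuclideanSpace ℝ (Fin n)) 1), IsJensenMeasure μ := by
  obtain ⟨g, hg_one, hg⟩ := exists_linearMap_nonneg_of_forall_smul_mem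
    (subharmonicMajorantCone n) 1 (fun c => nonneg_of_smul_one_mem_subharmonicMajorantCone hn)
    (fun φ => ⟨‖φ‖, mem_subharmonicMajorantCone_of_nonneg fun w => by
      have := (abs_le.mp (φ.norm_coe_le_norm w)).1
      simpa using by linarith⟩)
  obtain ⟨μ, hμ, hint⟩ := exists_isProbabilityMeasure_integral_eq g
    (fun φ hφ => hg φ (mem_subharmonicMajorantCone_of_nonneg hφ)) hg_one
  refine ⟨μ, hμ, fun F hFc hF => ?_⟩
  let φ : C(sphere (0 : EuclideanSpace ℝ (Fin n)) 1, ℝ) :=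
    ⟨fun w => F w, (hFc.mono sphere_subset_closedBall).domRestrict⟩
  have hφ : ∀ w, φ w = F w := fun _ => rfl
  have hmem : φ + (-F 0) • 1 ∈ subharmonicMajorantCone n :=
    ⟨fun z => F z + -F 0, hFc.add continuousOn_const, hF.add (isSubharmonicOn_const _ _),
      by simp, fun w => by simp [hφ]⟩
  have hnonneg := hg _ hmem
  rw [map_add, map_smul, hg_one, ← hint φ] at hnonneg
  simpa [hφ] using hnonneg

variable {μ : Measure (sphere (0 : EuclideanSpace ℝ (Fin n)) 1)}

lemma IsJensenMeasure.integral_inner (hμ : IsJensenMeasure μ) (ν : EuclideanSpace ℝ (Fin n)) :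
    ∫ w, inner ℝ ν (w : EuclideanSpace ℝ (Fin n)) ∂μ = 0 := by
  have hle : ∀ v : EuclideanSpace ℝ (Fin n),
      0 ≤ ∫ w, inner ℝ v (w : EuclideanSpace ℝ (Fin n)) ∂μ := fun v => by
    simpa using hμ.apply_zero_le_integral (innerSL ℝ v) (innerSL ℝ v).continuous.continuousOn
      (isSubharmonicOn_continuousLinearMap _ _)
  have hneg := hle (-ν)
  simp only [inner_neg_left, integral_neg] at hneg
  linarith [hle ν]

lemma IsJensenMeasure.integral_inner_apply_self_nonneg (hμ : IsJensenMeasure μ)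
    {A : EuclideanSpace ℝ (Fin n) →L[ℝ] EuclideanSpace ℝ (Fin n)}
    (hA : 0 ≤ ∑ i, A (EuclideanSpace.single i 1) i) :
    0 ≤ ∫ w, inner ℝ (A w) (w : EuclideanSpace ℝ (Fin n)) ∂μ := by
  simpa using hμ.apply_zero_le_integral (fun y => inner ℝ (A y) y)
    (by fun_prop) (isSubharmonicOn_inner_apply_self hA _)

lemma IsJensenMeasure.integral_inner_sq (hμ : IsJensenMeasure μ) {ν : EuclideanSpace ℝ (Fin n)}
    (hν : ‖ν‖ = 1) : ∫ w, inner ℝ ν (w : EuclideanSpace ℝ (Fin n)) ^ 2 ∂μ = 1 / n := by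
  have := hμ.toIsProbabilityMeasure
  have hn : (n : ℝ) ≠ 0 := by
    rintro hn
    obtain rfl : n = 0 := by exact_mod_cast hn
    simp [Subsingleton.elim ν 0] at hν
  let A : EuclideanSpace ℝ (Fin n) →L[ℝ] EuclideanSpace ℝ (Fin n) :=
    (innerSL ℝ ν).smulRight ν - (1 / n : ℝ) • .id ℝ _
  have hA : ∀ w : sphere (0 : EuclideanSpace ℝ (Fin n)) 1,
      inner ℝ (A w) (w : EuclideanSpace ℝ (Fin n)) = inner ℝ ν (w : EuclideanSpace ℝ (Fin n)) ^ 2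
        - 1 / n := fun w => by
    simp [A, inner_sub_left, inner_smul_left, pow_two]
  have htrace : ∑ i, A (EuclideanSpace.single i 1) i = 0 := by
    have hsum : ∑ i, ν i * ν i = 1 := by
      simpa [EuclideanSpace.norm_sq_eq, pow_two, hν] using (EuclideanSpace.norm_sq_eq ν).symm
    simp [A, EuclideanSpace.inner_single_right, hsum, hn]
  have hle := hμ.integral_inner_apply_self_nonneg htrace.ge
  have hge := hμ.integral_inner_apply_self_nonneg (A := -A) (by simp [htrace])
  have hsq : Integrable (fun w : sphere (0 : EuclideanSpace ℝ (Fin n)) 1 =>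
      inner ℝ ν (w : EuclideanSpace ℝ (Fin n)) ^ 2) μ :=
    Continuous.integrable_of_hasCompactSupport (by fun_prop) (.of_compactSpace _)
  simp only [neg_apply, inner_neg_left, integral_neg, hA,
    integral_sub hsq (integrable_const _), integral_const, probReal_univ, one_smul] at hle hge
  linarith

lemma IsJensenMeasure.apply_le_integral (hμ : IsJensenMeasure μ)
    {f : EuclideanSpace ℝ (Fin n) → ℝ} {x : EuclideanSpace ℝ (Fin n)} {s : ℝ} (hs : 0 < s)
    (hfc : ContinuousOn f (closedBall x s)) (hf : IsSubharmonicOn f (ball x s)) :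
    f x ≤ ∫ w, f (x + s • (w : EuclideanSpace ℝ (Fin n))) ∂μ := by
  have hclosedBall : MapsTo (fun y => x + s • y) (closedBall 0 1) (closedBall x s) := fun y hy => by
    simpa [norm_smul, abs_of_pos hs] using mul_le_of_le_one_right hs.le (by simpa using hy)
  have hball : ball 0 1 ⊆ (fun y => x + s • y) ⁻¹' ball x s := fun y hy => by
    simpa [norm_smul, abs_of_pos hs] using mul_lt_of_lt_one_right hs (by simpa using hy)
  simpa using hμ.apply_zero_le_integral (fun y => f (x + s • y))
    (hfc.comp (by fun_prop) hclosedBall) ((hf.comp_add_smul x s).mono hball)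

end JensenMeasure

section DistanceToComplement

lemma exists_isMax_infDist_compl {α : Type*} [PseudoMetricSpace α] [ProperSpace α] {Ω : Set α}
    (hΩo : IsOpen Ω) (hΩb : Bornology.IsBounded Ω) (hΩne : Ω.Nonempty) (hΩ' : Ωᶜ.Nonempty) :
    ∃ x₀, 0 < infDist x₀ Ωᶜ ∧ ∀ x, infDist x Ωᶜ ≤ infDist x₀ Ωᶜ := by
  obtain ⟨x₀, -, hx₀⟩ := hΩb.isCompact_closure.exists_isMaxOn hΩne.closure
    (continuous_infDist_pt Ωᶜ).continuousOn
  have hmax : ∀ x, infDist x Ωᶜ ≤ infDist x₀ Ωᶜ := fun x => by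
    by_cases hx : x ∈ Ω
    · exact hx₀ (subset_closure hx)
    · rw [infDist_zero_of_mem hx]
      exact infDist_nonneg
  obtain ⟨y, hy⟩ := hΩne
  have hpos := (hΩo.isClosed_compl.notMem_iff_infDist_pos hΩ').1 (not_not.2 hy)
  exact ⟨x₀, hpos.trans_le (hmax y), hmax⟩

variable {E : Type*} [NormedAddCommGroup E] [InnerProductSpace ℝ E] {Ω : Set E} {x y p ν : E}

lemma exists_norm_eq_one_inner_lt_of_notMem [CompleteSpace E] (hΩo : IsOpen Ω)
    (hΩc : Convex ℝ Ω) (hΩne : Ω.Nonempty) (hp : p ∉ Ω) :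
    ∃ ν : E, ‖ν‖ = 1 ∧ ∀ y ∈ Ω, inner ℝ ν y < inner ℝ ν p := by
  obtain ⟨F, hF⟩ := geometric_hahn_banach_open_point hΩc hΩo hp
  obtain ⟨v, rfl⟩ := (InnerProductSpace.toDual ℝ E).surjective F
  simp only [InnerProductSpace.toDual_apply_apply] at hF
  obtain ⟨y₀, hy₀⟩ := hΩne
  have hv : v ≠ 0 := by
    rintro rfl
    simpa using hF y₀ hy₀
  refine ⟨‖v‖⁻¹ • v, norm_smul_inv_norm (𝕜 := ℝ) hv, fun y hy => ?_⟩
  simp only [real_inner_smul_left]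
  exact mul_lt_mul_of_pos_left (hF y hy) (inv_pos.2 (norm_pos_iff.2 hv))

lemma infDist_compl_le_sub_inner {b : ℝ} (hν : ‖ν‖ = 1) (hb : ∀ y ∈ Ω, inner ℝ ν y < b)
    (hy : y ∈ Ω) : infDist y Ωᶜ ≤ b - inner ℝ ν y := by
  have hfoot : y + (b - inner ℝ ν y) • ν ∈ Ωᶜ := fun hmem => by
    have := hb _ hmem
    rw [inner_add_right, inner_smul_right, real_inner_self_eq_norm_sq, hν] at this
    linarith
  calc infDist y Ωᶜ ≤ dist y (y + (b - inner ℝ ν y) • ν) := infDist_le_dist_of_mem hfoot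
    _ = b - inner ℝ ν y := by
      rw [dist_self_add_right, norm_smul, hν, mul_one, Real.norm_eq_abs,
        abs_of_pos (sub_pos.2 (hb y hy))]

lemma exists_norm_eq_one_inner_lt_add_infDist_compl [ProperSpace E] (hΩo : IsOpen Ω)
    (hΩc : Convex ℝ Ω) (hΩne : Ω.Nonempty) (hΩ' : Ωᶜ.Nonempty) (x : E) :
    ∃ ν : E, ‖ν‖ = 1 ∧ ∀ y ∈ Ω, inner ℝ ν y < inner ℝ ν x + infDist x Ωᶜ := by
  obtain ⟨p, hp, hxp⟩ := hΩo.isClosed_compl.exists_infDist_eq_dist hΩ' x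
  obtain ⟨ν, hν, hlt⟩ := exists_norm_eq_one_inner_lt_of_notMem hΩo hΩc hΩne hp
  refine ⟨ν, hν, fun y hy => (hlt y hy).trans_le ?_⟩
  have := real_inner_le_norm ν (p - x)
  rw [hν, one_mul, inner_sub_right, ← dist_eq_norm, dist_comm, ← hxp] at this
  linarith

end DistanceToComplement

section ShellProfile

/-- The profile `G` of the test function `G (dist (·, Ωᶜ))`: a `C¹` function vanishing on
`(-∞, η]`, with `G'' = K` on `(η, T)` and `G'' = -1` on `(T, ∞)`. -/
noncomputable def shellProfile (K η T t : ℝ) : ℝ :=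
  K / 2 * max (t - η) 0 ^ 2 - (K + 1) / 2 * max (t - T) 0 ^ 2

/-- The derivative of `shellProfile`. -/
noncomputable def shellProfileSlope (K η T t : ℝ) : ℝ :=
  K * max (t - η) 0 - (K + 1) * max (t - T) 0

variable {K η T s t b : ℝ}

lemma continuous_shellProfile (K η T : ℝ) : Continuous (shellProfile K η T) := by
  unfold shellProfile
  fun_prop

lemma sq_max_add_le (a b : ℝ) : max (a + b) 0 ^ 2 ≤ max a 0 ^ 2 + 2 * max a 0 * b + b ^ 2 := by
  rcases le_total a 0 with h | h <;> rcases le_total (a + b) 0 with h' | h' <;>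
    simp only [max_eq_left, max_eq_right, h, h'] <;> nlinarith [sq_nonneg (a + b)]

lemma le_sq_max_add (a b : ℝ) : max a 0 ^ 2 + 2 * max a 0 * b ≤ max (a + b) 0 ^ 2 := by
  rcases le_total a 0 with h | h <;> rcases le_total (a + b) 0 with h' | h' <;>
    simp only [max_eq_left, max_eq_right, h, h'] <;> nlinarith [sq_nonneg (a + b), sq_nonneg b]

lemma shellProfile_add_le (hK : 0 ≤ K) (t b : ℝ) :
    shellProfile K η T (t + b) ≤
      shellProfile K η T t + shellProfileSlope K η T t * b + K / 2 * b ^ 2 := by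
  have hη := mul_le_mul_of_nonneg_left (sq_max_add_le (t - η) b) (by positivity : 0 ≤ K / 2)
  have hT := mul_le_mul_of_nonneg_left (le_sq_max_add (t - T) b)
    (by positivity : 0 ≤ (K + 1) / 2)
  simp only [shellProfile, shellProfileSlope, add_sub_right_comm t b]
  linarith

lemma shellProfile_add_eq (hηT : η ≤ T) (hb : |b| ≤ t - T) :
    shellProfile K η T (t + b) =
      shellProfile K η T t + shellProfileSlope K η T t * b - 1 / 2 * b ^ 2 := by
  have hb' := abs_le.1 hb
  unfold shellProfile shellProfileSlope
  rw [max_eq_left (by linarith), max_eq_left (by linarith), max_eq_left (by linarith),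
    max_eq_left (by linarith)]
  ring

lemma shellProfile_eq_zero (hηT : η ≤ T) (ht : t ≤ η) : shellProfile K η T t = 0 := by
  unfold shellProfile
  rw [max_eq_right (by linarith), max_eq_right (by linarith)]
  simp

lemma monotoneOn_shellProfile (hK : 0 ≤ K) (hηT : η ≤ T) :
    MonotoneOn (shellProfile K η T) (Iic (T + K * (T - η))) := by
  have hbelow : MonotoneOn (shellProfile K η T) (Iic T) := fun a _ b hb hab => by
    have hb : b ≤ T := hb
    unfold shellProfile
    rw [max_eq_right (by linarith : a - T ≤ 0), max_eq_right (by linarith : b - T ≤ 0)]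
    gcongr
  have habove : MonotoneOn (shellProfile K η T) (Icc T (T + K * (T - η))) :=
    fun a ha b hb hab => by
    have hTa := ha.1
    have hbT := hb.2
    unfold shellProfile
    rw [max_eq_left (by linarith : 0 ≤ a - T), max_eq_left (by linarith : 0 ≤ b - T),
      max_eq_left (by linarith : 0 ≤ a - η), max_eq_left (by linarith : 0 ≤ b - η)]
    have : 0 ≤ (b - a) * (K * (T - η) - (a + b - 2 * T) / 2) :=
      mul_nonneg (by linarith) (by linarith)
    linarith
  have hTle : T ≤ T + K * (T - η) := le_add_of_nonneg_right (mul_nonneg hK (sub_nonneg.2 hηT))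
  rw [← Iic_union_Icc_eq_Iic hTle]
  exact hbelow.union_right habove isGreatest_Iic (isLeast_Icc hTle)

lemma shellProfile_nonneg (hK : 0 ≤ K) (hηT : η ≤ T) (ht : t ≤ T + K * (T - η)) :
    0 ≤ shellProfile K η T t := by
  rw [← shellProfile_eq_zero (K := K) hηT (min_le_right t η)]
  exact monotoneOn_shellProfile hK hηT ((min_le_left t η).trans ht) ht (min_le_left t η)

/-- An upper bound for the second derivative of `shellProfile K η T` on `[t - s, t + s]`. -/
noncomputable def shellCurvature (K T s t : ℝ) : ℝ := if T + s ≤ t then -1 else K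

lemma shellProfile_add_le_shellCurvature (hK : 0 ≤ K) (hηT : η ≤ T) (hb : |b| ≤ s) :
    shellProfile K η T (t + b) ≤ shellProfile K η T t + shellProfileSlope K η T t * b +
      shellCurvature K T s t / 2 * b ^ 2 := by
  unfold shellCurvature
  split_ifs with h
  · rw [shellProfile_add_eq hηT (by linarith)]
    linarith
  · exact shellProfile_add_le hK t b

lemma measurable_shellCurvature (K T s : ℝ) : Measurable (shellCurvature K T s) :=
  Measurable.ite measurableSet_Ici measurable_const measurable_const

lemma norm_shellCurvature_le (hK : 0 ≤ K) (T s t : ℝ) : ‖shellCurvature K T s t‖ ≤ 1 + K := by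
  unfold shellCurvature
  split_ifs
  · simpa using hK
  · rw [Real.norm_of_nonneg hK]
    linarith

variable {E : Type*} [NormedAddCommGroup E] [InnerProductSpace ℝ E] {Ω : Set E} {x ν w : E}

lemma shellProfile_infDist_sub_le (hK : 0 ≤ K) (hη : 0 ≤ η) (hηT : η ≤ T)
    (hx : infDist x Ωᶜ + s ≤ T + K * (T - η)) (hs : 0 ≤ s) (hν : ‖ν‖ = 1) (hw : ‖w‖ = 1)
    (hΩ : ∀ y ∈ Ω, inner ℝ ν y < inner ℝ ν x + infDist x Ωᶜ) :
    shellProfile K η T (infDist (x - s • w) Ωᶜ) ≤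
      shellProfile K η T (infDist x Ωᶜ) +
        shellProfileSlope K η T (infDist x Ωᶜ) * s * inner ℝ ν w +
        shellCurvature K T s (infDist x Ωᶜ) / 2 * s ^ 2 * inner ℝ ν w ^ 2 := by
  set t := infDist x Ωᶜ
  have hbs : |s * inner ℝ ν w| ≤ s := by
    have := abs_real_inner_le_norm ν w
    rw [hν, hw, one_mul] at this
    rw [abs_mul, abs_of_nonneg hs]
    exact mul_le_of_le_one_right hs this
  have hle : t + s * inner ℝ ν w ≤ T + K * (T - η) := by linarith [(abs_le.1 hbs).2]
  have hshift : shellProfile K η T (infDist (x - s • w) Ωᶜ) ≤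
      shellProfile K η T (t + s * inner ℝ ν w) := by
    by_cases hy : x - s • w ∈ Ω
    · have hδ := infDist_compl_le_sub_inner hν hΩ hy
      rw [inner_sub_right, inner_smul_right] at hδ
      exact monotoneOn_shellProfile hK hηT (by simp only [mem_Iic]; linarith) hle (by linarith)
    · rw [infDist_zero_of_mem hy, shellProfile_eq_zero hηT hη]
      exact shellProfile_nonneg hK hηT hle
  linarith [shellProfile_add_le_shellCurvature (t := t) hK hηT hbs]

end ShellProfile

section ShellInequality

section Convolution

variable {G S : Type*} [AddGroup G] [MeasurableSpace G] [MeasurableSpace S] {v : S → G}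

lemma measurePreserving_prod_add [MeasurableAdd₂ G] (m : Measure G) [SFinite m]
    [m.IsAddRightInvariant] (μ : Measure S) [SFinite μ] (hv : Measurable v) :
    MeasurePreserving (fun z : G × S => (z.1 + v z.2, z.2)) (m.prod μ) (m.prod μ) := by
  have hskew : MeasurePreserving (fun z : S × G => (z.1, z.2 + v z.1)) (μ.prod m) (μ.prod m) :=
    (MeasurePreserving.id μ).skew_product (g := fun w x => x + v w)
      (measurable_snd.add (hv.comp measurable_fst))
      (.of_forall fun w => map_add_right_eq_self m (v w))
  exact (Measure.measurePreserving_swap.comp hskew).comp Measure.measurePreserving_swap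

variable {μ : Measure S} [IsFiniteMeasure μ] {m : Measure G} {u F : G → ℝ}

lemma integrable_prod_comp_sub_mul [MeasurableSub₂ G] (hv : Measurable v) (hu : Measurable u)
    {C : ℝ} (hC : ∀ x, ‖u x‖ ≤ C) (hF : Integrable F m) :
    Integrable (fun z : G × S => u (z.1 - v z.2) * F z.1) (m.prod μ) :=
  (hF.comp_fst μ).bdd_mul
    (hu.comp (measurable_fst.sub (hv.comp measurable_snd))).aestronglyMeasurable
    (.of_forall fun _ => hC _)

variable [MeasurableAdd₂ G] [MeasurableSub₂ G] [SFinite m] [m.IsAddRightInvariant]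

lemma integrable_prod_mul_comp_add (hv : Measurable v) (hu : Measurable u)
    {C : ℝ} (hC : ∀ x, ‖u x‖ ≤ C) (hF : Integrable F m) :
    Integrable (fun z : G × S => u z.1 * F (z.1 + v z.2)) (m.prod μ) := by
  simpa [Function.comp_def] using (measurePreserving_prod_add m μ hv).integrable_comp_of_integrable
    (integrable_prod_comp_sub_mul hv hu hC hF)

lemma integral_mul_integral_comp_add (hv : Measurable v) (hu : Measurable u)
    {C : ℝ} (hC : ∀ x, ‖u x‖ ≤ C) (hF : Integrable F m) :
    ∫ x, u x * ∫ w, F (x + v w) ∂μ ∂m = ∫ x, (∫ w, u (x - v w) ∂μ) * F x ∂m := by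
  have hsub := integrable_prod_comp_sub_mul (μ := μ) hv hu hC hF
  have hΦ := measurePreserving_prod_add m μ hv
  calc ∫ x, u x * ∫ w, F (x + v w) ∂μ ∂m
      = ∫ z : G × S, u z.1 * F (z.1 + v z.2) ∂m.prod μ := by
        simp_rw [integral_prod _ (integrable_prod_mul_comp_add hv hu hC hF), integral_const_mul]
    _ = ∫ z : G × S, u (z.1 - v z.2) * F z.1 ∂m.prod μ := by
        conv_rhs => rw [← hΦ.map_eq]
        rw [integral_map hΦ.aemeasurable (by rw [hΦ.map_eq]; exact hsub.aestronglyMeasurable)]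
        simp
    _ = ∫ x, (∫ w, u (x - v w) ∂μ) * F x ∂m := by
        simp_rw [integral_prod _ hsub, integral_mul_const]

end Convolution

variable {n : ℕ} {μ : Measure (sphere (0 : EuclideanSpace ℝ (Fin n)) 1)}
  {Ω : Set (EuclideanSpace ℝ (Fin n))} {f u : EuclideanSpace ℝ (Fin n) → ℝ}
  {x : EuclideanSpace ℝ (Fin n)} {r s ε : ℝ}

lemma IsJensenMeasure.indicator_le_integral (hμ : IsJensenMeasure μ) (hs : 0 < s)
    (hfc : ContinuousOn f Ω) (hf : IsSubharmonicOn f Ω) (hx : s < infDist x Ωᶜ) :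
    Ω.indicator f x ≤ ∫ w, Ω.indicator f (x + s • (w : EuclideanSpace ℝ (Fin n))) ∂μ := by
  have hball : closedBall x s ⊆ Ω := (closedBall_subset_ball hx).trans ball_infDist_compl_subset
  have hmem : ∀ w : sphere (0 : EuclideanSpace ℝ (Fin n)) 1,
      x + s • (w : EuclideanSpace ℝ (Fin n)) ∈ Ω := fun w =>
    hball (by simp [norm_smul, abs_of_pos hs])
  simp only [indicator_of_mem (hball (mem_closedBall_self hs.le)), indicator_of_mem (hmem _)]
  exact hμ.apply_le_integral hs (hfc.mono hball) (hf.mono (ball_subset_closedBall.trans hball))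

lemma IsJensenMeasure.integral_mul_indicator_le (hμ : IsJensenMeasure μ) (hΩo : IsOpen Ω)
    (hfi : IntegrableOn f Ω) (hfc : ContinuousOn f Ω) (hf : IsSubharmonicOn f Ω) (hs : 0 < s)
    (hu : Measurable u) (hu0 : ∀ x, 0 ≤ u x) {C : ℝ} (hC : ∀ x, u x ≤ C)
    (hus : ∀ x, infDist x Ωᶜ ≤ s → u x = 0) :
    ∫ x, u x * Ω.indicator f x ≤
      ∫ x, (∫ w, u (x - s • (w : EuclideanSpace ℝ (Fin n))) ∂μ) * Ω.indicator f x := by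
  have := hμ.toIsProbabilityMeasure
  have hF : Integrable (Ω.indicator f) := hfi.integrable_indicator hΩo.measurableSet
  have hC' : ∀ x, ‖u x‖ ≤ C := fun x => by simpa [abs_of_nonneg (hu0 x)] using hC x
  have hv : Measurable fun w : sphere (0 : EuclideanSpace ℝ (Fin n)) 1 =>
      s • (w : EuclideanSpace ℝ (Fin n)) := by fun_prop
  have hconv := (integrable_prod_mul_comp_add (μ := μ) hv hu hC' hF).integral_prod_left
  simp only [integral_const_mul] at hconv
  rw [← integral_mul_integral_comp_add hv hu hC' hF]
  refine integral_mono (hF.bdd_mul hu.aestronglyMeasurable (.of_forall hC')) hconv fun x => ?_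
  rcases le_or_gt (infDist x Ωᶜ) s with hx | hx
  · simp [hus x hx]
  · exact mul_le_mul_of_nonneg_left (hμ.indicator_le_integral hs hfc hf hx) (hu0 x)

lemma IsJensenMeasure.integral_mul_indicator_nonneg (hμ : IsJensenMeasure μ) (hΩo : IsOpen Ω)
    (hfi : IntegrableOn f Ω) (hfc : ContinuousOn f Ω) (hf0 : ∀ x ∈ Ω, 0 ≤ f x)
    (hf : IsSubharmonicOn f Ω) (hs : 0 < s) (hu : Measurable u) (hu0 : ∀ x, 0 ≤ u x) {C : ℝ}
    (hC : ∀ x, u x ≤ C) (hus : ∀ x, infDist x Ωᶜ ≤ s → u x = 0)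
    {c : EuclideanSpace ℝ (Fin n) → ℝ} (hc : Measurable c) {D : ℝ} (hD : ∀ x, ‖c x‖ ≤ D)
    (huc : ∀ x, ∫ w, u (x - s • (w : EuclideanSpace ℝ (Fin n))) ∂μ ≤ u x + c x) :
    0 ≤ ∫ x, c x * Ω.indicator f x := by
  have := hμ.toIsProbabilityMeasure
  have hF : Integrable (Ω.indicator f) := hfi.integrable_indicator hΩo.measurableSet
  have hC' : ∀ x, ‖u x‖ ≤ C := fun x => by simpa [abs_of_nonneg (hu0 x)] using hC x
  have huF := hF.bdd_mul hu.aestronglyMeasurable (.of_forall hC')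
  have hcF := hF.bdd_mul hc.aestronglyMeasurable (.of_forall hD)
  have hmeanF := (integrable_prod_comp_sub_mul (μ := μ)
    (v := fun w : sphere (0 : EuclideanSpace ℝ (Fin n)) 1 => s • (w : EuclideanSpace ℝ (Fin n)))
    (by fun_prop) hu hC' hF).integral_prod_left
  simp only [integral_mul_const] at hmeanF
  have hmean : ∫ x, (∫ w, u (x - s • (w : EuclideanSpace ℝ (Fin n))) ∂μ) * Ω.indicator f x ≤
      ∫ x, (u x * Ω.indicator f x + c x * Ω.indicator f x) :=
    integral_mono hmeanF (huF.add hcF) fun x => by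
      simpa only [add_mul] using
        mul_le_mul_of_nonneg_right (huc x) (indicator_nonneg hf0 x)
  rw [integral_add huF hcF] at hmean
  linarith [hμ.integral_mul_indicator_le hΩo hfi hfc hf hs hu hu0 hC hus]

lemma IsJensenMeasure.integral_le_of_le_quadratic (hμ : IsJensenMeasure μ)
    {φ : sphere (0 : EuclideanSpace ℝ (Fin n)) 1 → ℝ} (hφ : Continuous φ)
    {ν : EuclideanSpace ℝ (Fin n)} (hν : ‖ν‖ = 1) {a b c : ℝ}
    (hle : ∀ w, φ w ≤ a + b * inner ℝ ν (w : EuclideanSpace ℝ (Fin n)) +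
      c * inner ℝ ν (w : EuclideanSpace ℝ (Fin n)) ^ 2) :
    ∫ w, φ w ∂μ ≤ a + c / n := by
  have := hμ.toIsProbabilityMeasure
  have hint : ∀ ψ : sphere (0 : EuclideanSpace ℝ (Fin n)) 1 → ℝ, Continuous ψ →
      Integrable ψ μ := fun ψ hψ => hψ.integrable_of_hasCompactSupport (.of_compactSpace _)
  have hlin := (hint (fun w => inner ℝ ν (w : EuclideanSpace ℝ (Fin n)))
    (by fun_prop)).const_mul b
  have hsq := (hint (fun w => inner ℝ ν (w : EuclideanSpace ℝ (Fin n)) ^ 2)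
    (by fun_prop)).const_mul c
  have haff : Integrable (fun w : sphere (0 : EuclideanSpace ℝ (Fin n)) 1 =>
      a + b * inner ℝ ν (w : EuclideanSpace ℝ (Fin n))) μ := (integrable_const a).add hlin
  calc ∫ w, φ w ∂μ
      ≤ ∫ w, (a + b * inner ℝ ν (w : EuclideanSpace ℝ (Fin n)) +
          c * inner ℝ ν (w : EuclideanSpace ℝ (Fin n)) ^ 2) ∂μ :=
        integral_mono (hint φ hφ) (haff.add hsq) hle
    _ = a + b * 0 + c * (1 / n) := by
        rw [integral_add haff hsq, integral_add (integrable_const a) hlin, integral_const_mul,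
          integral_const_mul, hμ.integral_inner, hμ.integral_inner_sq hν]
        simp
    _ = a + c / n := by ring

lemma IsJensenMeasure.integral_shellProfile_infDist_le (hμ : IsJensenMeasure μ)
    (hΩo : IsOpen Ω) (hΩc : Convex ℝ Ω) (hΩne : Ω.Nonempty) (hΩ' : Ωᶜ.Nonempty) {K η T : ℝ}
    (hK : 0 ≤ K) (hη : 0 ≤ η) (hηT : η ≤ T) (hs : 0 ≤ s)
    (hx : infDist x Ωᶜ + s ≤ T + K * (T - η)) :
    ∫ w, shellProfile K η T (infDist (x - s • (w : EuclideanSpace ℝ (Fin n))) Ωᶜ) ∂μ ≤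
      shellProfile K η T (infDist x Ωᶜ) +
        s ^ 2 / (2 * n) * shellCurvature K T s (infDist x Ωᶜ) := by
  obtain ⟨ν, hν, hsupp⟩ := exists_norm_eq_one_inner_lt_add_infDist_compl hΩo hΩc hΩne hΩ' x
  have hcont : Continuous fun w : sphere (0 : EuclideanSpace ℝ (Fin n)) 1 =>
      shellProfile K η T (infDist (x - s • (w : EuclideanSpace ℝ (Fin n))) Ωᶜ) :=
    (continuous_shellProfile K η T).comp ((continuous_infDist_pt _).comp (by fun_prop))
  refine (hμ.integral_le_of_le_quadratic hcont hν fun w =>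
    shellProfile_infDist_sub_le hK hη hηT hx hs hν (norm_eq_of_mem_sphere w) hsupp).trans_eq ?_
  ring

lemma integral_shellCurvature_mul_indicator_nonneg (hn : 0 < n) (hΩo : IsOpen Ω)
    (hΩc : Convex ℝ Ω) (hΩne : Ω.Nonempty) (hΩ' : Ωᶜ.Nonempty) (hfi : IntegrableOn f Ω)
    (hfc : ContinuousOn f Ω) (hf0 : ∀ x ∈ Ω, 0 ≤ f x) (hf : IsSubharmonicOn f Ω)
    (hr : ∀ x, infDist x Ωᶜ ≤ r) (hs : 0 < s) (hε : 0 < ε) :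
    0 ≤ ∫ x, shellCurvature (r / ε) (ε + 2 * s) s (infDist x Ωᶜ) * Ω.indicator f x := by
  obtain ⟨μ, hμ⟩ := exists_isJensenMeasure hn
  have hK : 0 ≤ r / ε := div_nonneg (infDist_nonneg.trans (hr 0)) hε.le
  have hηT : 2 * s ≤ ε + 2 * s := by linarith
  have hδ : ∀ x, infDist x Ωᶜ + s ≤ ε + 2 * s + r / ε * (ε + 2 * s - 2 * s) := fun x => by
    rw [add_sub_cancel_right, div_mul_cancel₀ _ hε.ne']
    linarith [hr x]
  have hrT : r ≤ ε + 2 * s + r / ε * (ε + 2 * s - 2 * s) := by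
    rw [add_sub_cancel_right, div_mul_cancel₀ _ hε.ne']
    linarith
  have hnonneg := hμ.integral_mul_indicator_nonneg hΩo hfi hfc hf0 hf hs
    (u := fun x => shellProfile (r / ε) (2 * s) (ε + 2 * s) (infDist x Ωᶜ))
    ((continuous_shellProfile _ _ _).comp (continuous_infDist_pt _)).measurable
    (fun x => shellProfile_nonneg hK hηT ((hr x).trans hrT))
    (fun x => monotoneOn_shellProfile hK hηT ((hr x).trans hrT) hrT (hr x))
    (fun x hx => shellProfile_eq_zero hηT (by linarith))
    (c := fun x => s ^ 2 / (2 * n) * shellCurvature (r / ε) (ε + 2 * s) s (infDist x Ωᶜ))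
    (((measurable_shellCurvature _ _ _).comp (continuous_infDist_pt _).measurable).const_mul _)
    (D := s ^ 2 / (2 * n) * (1 + r / ε))
    (fun x => by
      rw [norm_mul, Real.norm_of_nonneg (by positivity)]
      gcongr
      exact norm_shellCurvature_le hK _ _ _)
    (fun x => hμ.integral_shellProfile_infDist_le hΩo hΩc hΩne hΩ' hK (by positivity) hηT hs.le
      (hδ x))
  simp only [mul_assoc, integral_const_mul] at hnonneg
  exact nonneg_of_mul_nonneg_right hnonneg (by positivity)

lemma setIntegral_le_mul_setIntegral_of_shell (hn : 0 < n) (hΩo : IsOpen Ω)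
    (hΩc : Convex ℝ Ω) (hΩne : Ω.Nonempty) (hΩ' : Ωᶜ.Nonempty) (hfi : IntegrableOn f Ω)
    (hfc : ContinuousOn f Ω) (hf0 : ∀ x ∈ Ω, 0 ≤ f x) (hf : IsSubharmonicOn f Ω)
    (hr : ∀ x, infDist x Ωᶜ ≤ r) (hs : 0 < s) (hε : 0 < ε) :
    ∫ x in Ω ∩ {x | ε + 3 * s ≤ infDist x Ωᶜ}, f x ≤
      r / ε * ∫ x in Ω \ {x | ε + 3 * s ≤ infDist x Ωᶜ}, f x := by
  have hK : 0 ≤ r / ε := div_nonneg (infDist_nonneg.trans (hr 0)) hε.le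
  set D := {x | ε + 3 * s ≤ infDist x Ωᶜ} with hD
  have hDm : MeasurableSet D :=
    measurableSet_le measurable_const (continuous_infDist_pt _).measurable
  have hmem : ∀ x, ε + 2 * s + s ≤ infDist x Ωᶜ ↔ x ∈ D := fun x => by
    rw [hD, mem_ofPred_eq]
    ring_nf
  have hF : Integrable (Ω.indicator f) := hfi.integrable_indicator hΩo.measurableSet
  have hint := hF.bdd_mul (c := 1 + r / ε) ((measurable_shellCurvature (r / ε) (ε + 2 * s) s).comp
    (continuous_infDist_pt Ωᶜ).measurable).aestronglyMeasurable
    (.of_forall fun x => norm_shellCurvature_le hK _ _ _)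
  have hnonneg :=
    integral_shellCurvature_mul_indicator_nonneg hn hΩo hΩc hΩne hΩ' hfi hfc hf0 hf hr hs hε
  have hdeep : ∫ x in D, shellCurvature (r / ε) (ε + 2 * s) s (infDist x Ωᶜ) * Ω.indicator f x =
      -∫ x in Ω ∩ D, f x := by
    rw [inter_comm, ← setIntegral_indicator hΩo.measurableSet, ← integral_neg]
    refine setIntegral_congr_fun hDm fun x hx => ?_
    simp [shellCurvature, hmem, hx]
  have hshell : ∫ x in Dᶜ, shellCurvature (r / ε) (ε + 2 * s) s (infDist x Ωᶜ) *
      Ω.indicator f x = r / ε * ∫ x in Ω \ D, f x := by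
    rw [sdiff_eq, inter_comm, ← setIntegral_indicator hΩo.measurableSet, ← integral_const_mul]
    refine setIntegral_congr_fun hDm.compl fun x hx => ?_
    simp [shellCurvature, hmem, notMem_of_mem_compl hx]
  simp only [Function.comp_def] at hint
  rw [← integral_add_compl hDm hint, hdeep, hshell] at hnonneg
  linarith

lemma setIntegral_le_one_add_div_mul_setIntegral_shell (hn : 0 < n) (hΩo : IsOpen Ω)
    (hΩc : Convex ℝ Ω) (hΩne : Ω.Nonempty) (hΩ' : Ωᶜ.Nonempty) (hfi : IntegrableOn f Ω)
    (hfc : ContinuousOn f Ω) (hf0 : ∀ x ∈ Ω, 0 ≤ f x) (hf : IsSubharmonicOn f Ω)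
    (hr : ∀ x, infDist x Ωᶜ ≤ r) (hε : 0 < ε) :
    ∫ x in Ω, f x ≤ (1 + r / ε) * ∫ x in Ω ∩ {x | infDist x Ωᶜ < ε}, f x := by
  have hDm : MeasurableSet {x | ε ≤ infDist x Ωᶜ} :=
    measurableSet_le measurable_const (continuous_infDist_pt _).measurable
  have hshell : Ω \ {x | ε ≤ infDist x Ωᶜ} = Ω ∩ {x | infDist x Ωᶜ < ε} := by
    ext x
    simp
  have hlim : Tendsto (fun s : ℝ => r / (ε - 3 * s) * ∫ x in Ω ∩ {x | infDist x Ωᶜ < ε}, f x)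
      (𝓝[>] 0) (𝓝 (r / ε * ∫ x in Ω ∩ {x | infDist x Ωᶜ < ε}, f x)) := by
    have hden : Tendsto (fun s : ℝ => ε - 3 * s) (𝓝[>] 0) (𝓝 ε) :=
      (Continuous.tendsto' (by fun_prop) 0 ε (by simp)).mono_left nhdsWithin_le_nhds
    exact (tendsto_const_nhds.div hden hε.ne').mul_const _
  have hdeep : ∫ x in Ω ∩ {x | ε ≤ infDist x Ωᶜ}, f x ≤
      r / ε * ∫ x in Ω ∩ {x | infDist x Ωᶜ < ε}, f x := by
    refine ge_of_tendsto hlim ?_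
    filter_upwards [Ioo_mem_nhdsGT (show 0 < ε / 3 by positivity)] with s hs
    simpa [hshell] using setIntegral_le_mul_setIntegral_of_shell hn hΩo hΩc hΩne hΩ' hfi hfc hf0
      hf hr hs.1 (show 0 < ε - 3 * s by linarith [hs.2])
  have hsplit := integral_inter_add_sdiff hDm hfi
  rw [hshell] at hsplit
  linarith

end ShellInequality

section RadialProjection

/-- `Ω` is an open convex set with `ball 0 r ⊆ Ω ⊆ closedBall 0 R`, where `0 < r`. -/
structure IsSandwiched {E : Type*} [NormedAddCommGroup E] [NormedSpace ℝ E]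
    (Ω : Set E) (r R : ℝ) : Prop where
  isOpen : IsOpen Ω
  convex : Convex ℝ Ω
  pos : 0 < r
  ball_subset : ball 0 r ⊆ Ω
  subset_closedBall : Ω ⊆ closedBall 0 R

/-- The central projection of `x ≠ 0` onto the boundary of a star-shaped set `Ω`; the junk value
at `0` is `0`. -/
noncomputable def radialProj {E : Type*} [AddCommGroup E] [Module ℝ E] (Ω : Set E) (x : E) : E :=
  (gauge Ω x)⁻¹ • x

variable {E : Type*} [NormedAddCommGroup E] [NormedSpace ℝ E] {Ω : Set E} {r R s t : ℝ} {x q : E}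

lemma radialProj_smul (hs : 0 < s) (x : E) : radialProj Ω (s • x) = radialProj Ω x := by
  unfold radialProj
  rw [gauge_smul_of_nonneg hs.le, smul_eq_mul, mul_inv_rev, mul_smul, inv_smul_smul₀ hs.ne']

lemma compl_nonempty_of_isBounded [Nontrivial E] (hΩb : Bornology.IsBounded Ω) :
    Ωᶜ.Nonempty := by
  rw [nonempty_compl]
  rintro rfl
  exact NormedSpace.unbounded_univ ℝ E hΩb

lemma exists_isSandwiched_preimage_add_left {x₀ : E} (hΩo : IsOpen Ω) (hΩc : Convex ℝ Ω)
    (hΩb : Bornology.IsBounded Ω) (hr : 0 < r) (hball : ball x₀ r ⊆ Ω) :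
    ∃ R, IsSandwiched ((x₀ + ·) ⁻¹' Ω) r R := by
  obtain ⟨R, hR⟩ :=
    ((isometry_add_left x₀).antilipschitz.isBounded_preimage hΩb).subset_closedBall 0
  exact ⟨R, hΩo.preimage (continuous_const_add x₀), hΩc.translate_preimage_right x₀, hr,
    fun y hy => hball (by simpa using hy), hR⟩

namespace IsSandwiched

lemma zero_mem (hΩ : IsSandwiched Ω r R) : (0 : E) ∈ Ω :=
  hΩ.ball_subset (mem_ball_self hΩ.pos)

lemma mem_nhds_zero (hΩ : IsSandwiched Ω r R) : Ω ∈ 𝓝 (0 : E) := hΩ.isOpen.mem_nhds hΩ.zero_mem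

lemma isBounded (hΩ : IsSandwiched Ω r R) : Bornology.IsBounded Ω :=
  isBounded_closedBall.subset hΩ.subset_closedBall

lemma compl_nonempty [Nontrivial E] (hΩ : IsSandwiched Ω r R) : Ωᶜ.Nonempty :=
  compl_nonempty_of_isBounded hΩ.isBounded

lemma isCompact_frontier [ProperSpace E] (hΩ : IsSandwiched Ω r R) : IsCompact (frontier Ω) :=
  hΩ.isBounded.isCompact_closure.of_isClosed_subset isClosed_frontier frontier_subset_closure

lemma norm_le (hΩ : IsSandwiched Ω r R) (hq : q ∈ closure Ω) : ‖q‖ ≤ R := by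
  simpa using closure_minimal hΩ.subset_closedBall isClosed_closedBall hq

lemma outerRadius_nonneg (hΩ : IsSandwiched Ω r R) : 0 ≤ R := by
  simpa using hΩ.norm_le (subset_closure hΩ.zero_mem)

lemma notMem_of_mem_frontier (hΩ : IsSandwiched Ω r R) (hq : q ∈ frontier Ω) : q ∉ Ω := by
  rw [hΩ.isOpen.frontier_eq] at hq
  exact hq.2

lemma gauge_lt_one_iff (hΩ : IsSandwiched Ω r R) : gauge Ω x < 1 ↔ x ∈ Ω := by
  rw [gauge_lt_one_iff_mem_interior hΩ.convex hΩ.mem_nhds_zero, hΩ.isOpen.interior_eq]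

lemma gauge_eq_one_iff (hΩ : IsSandwiched Ω r R) : gauge Ω q = 1 ↔ q ∈ frontier Ω :=
  gauge_eq_one_iff_mem_frontier hΩ.convex hΩ.mem_nhds_zero

lemma gauge_pos_iff (hΩ : IsSandwiched Ω r R) : 0 < gauge Ω x ↔ x ≠ 0 :=
  gauge_pos (absorbent_nhds_zero hΩ.mem_nhds_zero)
    (NormedSpace.isVonNBounded_of_isBounded ℝ hΩ.isBounded)

lemma continuous_gauge (hΩ : IsSandwiched Ω r R) : Continuous (gauge Ω) :=
  _root_.continuous_gauge hΩ.convex hΩ.mem_nhds_zero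

lemma measurable_radialProj [MeasurableSpace E] [BorelSpace E] [SecondCountableTopology E]
    (hΩ : IsSandwiched Ω r R) : Measurable (radialProj Ω) :=
  hΩ.continuous_gauge.measurable.inv.smul measurable_id

lemma radialProj_mem_frontier (hΩ : IsSandwiched Ω r R) (hx : x ≠ 0) :
    radialProj Ω x ∈ frontier Ω := by
  have hg := hΩ.gauge_pos_iff.2 hx
  rw [← hΩ.gauge_eq_one_iff, radialProj, gauge_smul_of_nonneg (inv_nonneg.2 hg.le), smul_eq_mul,
    inv_mul_cancel₀ hg.ne']

lemma gauge_smul_radialProj (hΩ : IsSandwiched Ω r R) (x : E) :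
    gauge Ω x • radialProj Ω x = x := by
  rcases eq_or_ne x 0 with rfl | hx
  · simp [radialProj]
  · exact smul_inv_smul₀ (hΩ.gauge_pos_iff.2 hx).ne' x

lemma dist_radialProj_le (hΩ : IsSandwiched Ω r R) (hx : x ∈ Ω) (hx0 : x ≠ 0) :
    dist x (radialProj Ω x) ≤ (1 - gauge Ω x) * R := by
  have hl : 0 ≤ 1 - gauge Ω x := by linarith [hΩ.gauge_lt_one_iff.2 hx]
  calc dist x (radialProj Ω x)
      = ‖(1 - gauge Ω x) • radialProj Ω x‖ := by
        rw [dist_comm, dist_eq_norm, sub_smul, one_smul, hΩ.gauge_smul_radialProj]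
    _ ≤ (1 - gauge Ω x) * R := by
        rw [norm_smul, Real.norm_of_nonneg hl]
        gcongr
        exact hΩ.norm_le (frontier_subset_closure (hΩ.radialProj_mem_frontier hx0))

lemma le_infDist_zero_compl (hΩ : IsSandwiched Ω r R) (hΩ' : Ωᶜ.Nonempty) :
    r ≤ infDist 0 Ωᶜ := by
  refine (le_infDist hΩ').2 fun y hy => ?_
  by_contra! h
  exact hy (hΩ.ball_subset (by rwa [mem_ball']))

end IsSandwiched

lemma mul_infDist_compl_le (hΩo : IsOpen Ω) (hΩc : Convex ℝ Ω) (hq : q ∈ closure Ω)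
    (ht : 0 < t) (ht1 : t ≤ 1) :
    t * infDist x Ωᶜ ≤ infDist (t • x + (1 - t) • q) Ωᶜ := by
  rcases Ωᶜ.eq_empty_or_nonempty with hempty | hΩ'
  · simp [hempty]
  refine (le_infDist hΩ').2 fun y hy => ?_
  by_contra! hdist
  set z := x + t⁻¹ • (y - (t • x + (1 - t) • q)) with hz
  have hzΩ : z ∈ Ω := by
    refine ball_infDist_compl_subset (x := x) ?_
    rw [mem_ball, hz, dist_self_add_left, norm_smul, norm_inv, Real.norm_of_nonneg ht.le,
      ← dist_eq_norm, dist_comm, inv_mul_lt_iff₀ ht]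
    exact hdist
  have hcombo := hΩc.combo_interior_closure_subset_interior ht (sub_nonneg.2 ht1)
    (add_sub_cancel t 1)
  rw [hΩo.interior_eq] at hcombo
  refine hy (?_ : y ∈ Ω)
  convert hcombo (add_mem_add (smul_mem_smul_set hzΩ) (smul_mem_smul_set hq)) using 1
  rw [hz, smul_add, smul_inv_smul₀ ht.ne']
  abel

end RadialProjection

section SupportValue

/-- The difference quotient at `q` of the distance to `Ωᶜ` along the ray from `q` to the origin. -/
noncomputable def supportQuotient {E : Type*} [NormedAddCommGroup E] [NormedSpace ℝ E]
    (Ω : Set E) (t : ℝ) (q : E) : ℝ :=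
  infDist ((1 - t) • q) Ωᶜ / t

/-- The limit of `supportQuotient Ω t q` as `t → 0`. For a boundary point `q` of an open convex set
it is the least support value `⟪ν, q⟫` among the outer unit normals `ν` at `q`; the supremum
over a sequence makes it measurable in `q`. -/
noncomputable def leastSupport {E : Type*} [NormedAddCommGroup E] [NormedSpace ℝ E]
    (Ω : Set E) (q : E) : ℝ :=
  ⨆ k : ℕ, supportQuotient Ω (1 / ((k : ℝ) + 1)) q

section Normed

variable {E : Type*} [NormedAddCommGroup E] [NormedSpace ℝ E] {Ω : Set E} {r R t : ℝ} {x q : E}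

lemma antitoneOn_supportQuotient (hΩo : IsOpen Ω) (hΩc : Convex ℝ Ω) (hq : q ∈ closure Ω) :
    AntitoneOn (fun t => supportQuotient Ω t q) (Ioi 0) := fun s hs t ht hst => by
  have hs : 0 < s := hs
  have ht : 0 < t := ht
  have hpoint : (s / t) • (1 - t) • q + (1 - s / t) • q = (1 - s) • q := by
    rw [smul_smul, ← add_smul]
    congr 1
    field_simp
    ring
  have := mul_infDist_compl_le (x := (1 - t) • q) hΩo hΩc hq (div_pos hs ht)
    ((div_le_one ht).2 hst)
  rw [hpoint] at this
  simp only [supportQuotient]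
  rw [le_div_iff₀ hs]
  refine le_trans (le_of_eq ?_) this
  ring

lemma measurable_supportQuotient [MeasurableSpace E] [BorelSpace E] (Ω : Set E) (t : ℝ) :
    Measurable (supportQuotient Ω t) :=
  (((continuous_infDist_pt _).comp (continuous_const_smul _)).div_const _).measurable

lemma measurable_leastSupport [MeasurableSpace E] [BorelSpace E] (Ω : Set E) :
    Measurable (leastSupport Ω) :=
  Measurable.iSup fun _ => measurable_supportQuotient Ω _

namespace IsSandwiched

lemma le_supportQuotient (hΩ : IsSandwiched Ω r R) (hq : q ∈ frontier Ω) (ht : 0 < t)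
    (ht1 : t ≤ 1) : r ≤ supportQuotient Ω t q := by
  have hmono := antitoneOn_supportQuotient hΩ.isOpen hΩ.convex (frontier_subset_closure hq)
    ht (zero_lt_one (α := ℝ)) ht1
  have hone : supportQuotient Ω 1 q = infDist 0 Ωᶜ := by simp [supportQuotient]
  exact ((hΩ.le_infDist_zero_compl ⟨q, hΩ.notMem_of_mem_frontier hq⟩).trans_eq hone.symm).trans
    hmono

lemma supportQuotient_le (hΩ : IsSandwiched Ω r R) (hq : q ∈ frontier Ω) (ht : 0 < t) :
    supportQuotient Ω t q ≤ R := by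
  rw [supportQuotient, div_le_iff₀ ht]
  calc infDist ((1 - t) • q) Ωᶜ
      ≤ dist ((1 - t) • q) q := infDist_le_dist_of_mem (hΩ.notMem_of_mem_frontier hq)
    _ = ‖q‖ * t := by
        rw [dist_comm, dist_eq_norm, sub_smul, one_smul, sub_sub_cancel, norm_smul,
          Real.norm_of_nonneg ht.le, mul_comm]
    _ ≤ R * t := by
        gcongr
        exact hΩ.norm_le (frontier_subset_closure hq)

lemma tendsto_supportQuotient (hΩ : IsSandwiched Ω r R) (hq : q ∈ frontier Ω) :
    Tendsto (fun k : ℕ => supportQuotient Ω (1 / ((k : ℝ) + 1)) q) atTop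
      (𝓝 (leastSupport Ω q)) := by
  refine tendsto_atTop_ciSup (fun j k hjk => ?_) ⟨R, ?_⟩
  · exact antitoneOn_supportQuotient hΩ.isOpen hΩ.convex (frontier_subset_closure hq)
      (mem_Ioi.2 Nat.one_div_pos_of_nat) (mem_Ioi.2 Nat.one_div_pos_of_nat)
      (Nat.one_div_le_one_div hjk)
  · rintro _ ⟨k, rfl⟩
    exact hΩ.supportQuotient_le hq Nat.one_div_pos_of_nat

lemma le_leastSupport (hΩ : IsSandwiched Ω r R) (hq : q ∈ frontier Ω) : r ≤ leastSupport Ω q :=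
  ge_of_tendsto' (hΩ.tendsto_supportQuotient hq) fun k =>
    hΩ.le_supportQuotient hq Nat.one_div_pos_of_nat (div_le_one_of_le₀ (by simp) (by positivity))

lemma one_sub_gauge_lt_of_infDist_lt (hΩ : IsSandwiched Ω r R) (hΩ' : Ωᶜ.Nonempty) (hx : x ∈ Ω)
    (ht : 0 < t) (ht1 : t ≤ 1) (hδ : infDist x Ωᶜ < r * t) :
    x ≠ 0 ∧ 1 - gauge Ω x < t ∧
      1 - gauge Ω x < r * t / supportQuotient Ω t (radialProj Ω x) := by
  have hx0 : x ≠ 0 := by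
    rintro rfl
    have := mul_le_of_le_one_right hΩ.pos.le ht1
    linarith [hΩ.le_infDist_zero_compl hΩ']
  have hq := hΩ.radialProj_mem_frontier hx0
  set l := 1 - gauge Ω x with hl
  have hl0 : 0 < l := sub_pos.2 (hΩ.gauge_lt_one_iff.2 hx)
  have hl1 : l ≤ 1 := by linarith [hΩ.gauge_pos_iff.2 hx0]
  have hquot : supportQuotient Ω l (radialProj Ω x) = infDist x Ωᶜ / l := by
    rw [supportQuotient, hl, sub_sub_cancel, hΩ.gauge_smul_radialProj]
  have hlt : l < t := by
    have := hΩ.le_supportQuotient hq hl0 hl1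
    rw [hquot, le_div_iff₀ hl0] at this
    exact lt_of_mul_lt_mul_left (this.trans_lt hδ) hΩ.pos.le
  refine ⟨hx0, hlt, ?_⟩
  have hmono := antitoneOn_supportQuotient hΩ.isOpen hΩ.convex (frontier_subset_closure hq)
    hl0 ht hlt.le
  simp only [hquot, le_div_iff₀ hl0] at hmono
  rw [lt_div_iff₀ (hΩ.pos.trans_le (hΩ.le_supportQuotient hq ht ht1)), mul_comm]
  exact hmono.trans_lt hδ

end IsSandwiched

end Normed

/-- `ν` is an outer unit normal of `Ω` at `q`. -/
structure IsOuterNormal {E : Type*} [NormedAddCommGroup E] [InnerProductSpace ℝ E]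
    (Ω : Set E) (q ν : E) : Prop where
  norm_eq_one : ‖ν‖ = 1
  inner_le : ∀ y ∈ closure Ω, inner ℝ ν y ≤ inner ℝ ν q

variable {E : Type*} [NormedAddCommGroup E] [InnerProductSpace ℝ E] {Ω : Set E} {r R : ℝ} {q ν : E}

lemma IsOuterNormal.le_inner (hν : IsOuterNormal Ω q ν) (hΩ : IsSandwiched Ω r R) :
    r ≤ inner ℝ ν q := by
  have hmem : r • ν ∈ closure Ω := by
    refine closure_mono hΩ.ball_subset ?_
    rw [closure_ball _ hΩ.pos.ne']
    simp [norm_smul, hν.norm_eq_one, abs_of_pos hΩ.pos]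
  simpa [inner_smul_right, real_inner_self_eq_norm_sq, hν.norm_eq_one] using hν.inner_le _ hmem

/-- The normals at the points of `Ω` near `(1 - t) • q` have support value at most
`supportQuotient Ω t q` at `q`, so a limit of them as `t → 0` works. -/
lemma IsSandwiched.exists_isOuterNormal_inner_le [FiniteDimensional ℝ E]
    (hΩ : IsSandwiched Ω r R) (hq : q ∈ frontier Ω) :
    ∃ ν, IsOuterNormal Ω q ν ∧ inner ℝ ν q ≤ leastSupport Ω q := by
  have := FiniteDimensional.proper ℝ E
  have hqΩ := hΩ.notMem_of_mem_frontier hq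
  set τ : ℕ → ℝ := fun k => 1 / ((k : ℝ) + 1)
  have hτ : Tendsto τ atTop (𝓝 0) := tendsto_one_div_add_atTop_nhds_zero_nat
  have hpoint : Tendsto (fun k => (1 - τ k) • q) atTop (𝓝 q) := by
    simpa using ((tendsto_const_nhds (x := (1 : ℝ))).sub hτ).smul_const q
  choose ν hν hsupp using fun k : ℕ => exists_norm_eq_one_inner_lt_add_infDist_compl hΩ.isOpen
    hΩ.convex ⟨0, hΩ.zero_mem⟩ ⟨q, hqΩ⟩ ((1 - τ k) • q)
  have hsupp' : ∀ k, ∀ y ∈ closure Ω, inner ℝ (ν k) y ≤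
      inner ℝ (ν k) ((1 - τ k) • q) + infDist ((1 - τ k) • q) Ωᶜ := fun k =>
    closure_minimal (t := {y | inner ℝ (ν k) y ≤ _}) (fun y hy => (hsupp k y hy).le)
      (isClosed_le (by fun_prop) continuous_const)
  have hquot : ∀ k, inner ℝ (ν k) q ≤ supportQuotient Ω (τ k) q := fun k => by
    have := hsupp' k q (frontier_subset_closure hq)
    rw [inner_smul_right] at this
    rw [supportQuotient, le_div_iff₀ Nat.one_div_pos_of_nat]
    linarith
  obtain ⟨ν₀, hν₀, φ, hφ, hlim⟩ := (isCompact_sphere (0 : E) 1).tendsto_subseq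
    (x := ν) fun k => by simp [hν k]
  have hpoint' := hpoint.comp hφ.tendsto_atTop
  refine ⟨ν₀, ⟨by simpa using hν₀, fun y hy => ?_⟩,
    le_of_tendsto_of_tendsto' (hlim.inner tendsto_const_nhds)
      ((hΩ.tendsto_supportQuotient hq).comp hφ.tendsto_atTop) fun k => hquot (φ k)⟩
  have hbound := (hlim.inner hpoint').add (((continuous_infDist_pt Ωᶜ).tendsto q).comp hpoint')
  rw [infDist_zero_of_mem hqΩ, add_zero] at hbound
  exact le_of_tendsto_of_tendsto' (hlim.inner tendsto_const_nhds) hbound fun k =>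
    hsupp' (φ k) y hy

end SupportValue

section ShellLimit

variable {E : Type*} [NormedAddCommGroup E] [NormedSpace ℝ E] [FiniteDimensional ℝ E]
  [Nontrivial E] [MeasurableSpace E] [BorelSpace E] (μ : Measure E) [μ.IsAddHaarMeasure]

lemma lintegral_eq_lintegral_toSphere {F : E → ℝ≥0∞} (hF : Measurable F) :
    ∫⁻ x, F x ∂μ = ∫⁻ w : sphere (0 : E) 1, (∫⁻ s in Ioi (0 : ℝ),
      ENNReal.ofReal (s ^ (Module.finrank ℝ E - 1)) * F (s • (w : E))) ∂μ.toSphere := by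
  have hmp := μ.measurePreserving_homeomorphUnitSphereProd
  calc ∫⁻ x, F x ∂μ = ∫⁻ x : ({0}ᶜ : Set E), F x ∂(μ.comap (↑)) := by
        rw [lintegral_subtype_comap (measurableSet_singleton _).compl, restrict_compl_singleton]
    _ = ∫⁻ z, F ((z.2 : ℝ) • (z.1 : E)) ∂(μ.toSphere.prod (Measure.volumeIoiPow _)) := by
        rw [← hmp.lintegral_comp (by fun_prop)]
        refine lintegral_congr fun x => ?_
        rw [← homeomorphUnitSphereProd_symm_apply_coe, Homeomorph.symm_apply_apply]
    _ = _ := by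
        rw [lintegral_prod _ (by fun_prop)]
        refine lintegral_congr fun w => ?_
        rw [Measure.volumeIoiPow,
          lintegral_withDensity_eq_lintegral_mul _ (by fun_prop) (by fun_prop)]
        exact lintegral_subtype_comap measurableSet_Ioi
          (fun s : ℝ => ENNReal.ofReal (s ^ _) * F (s • (w : E)))

lemma setLIntegral_Ioo_pow (m : ℕ) {ρ : ℝ} (hρ : 0 ≤ ρ) :
    ∫⁻ s in Ioo 0 ρ, ENNReal.ofReal (s ^ m) = ENNReal.ofReal (ρ ^ (m + 1) / (m + 1)) := by
  rw [Measure.restrict_congr_set Ioo_ae_eq_Ioc,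
    ← ofReal_integral_eq_lintegral_ofReal (intervalIntegral.intervalIntegrable_pow _).1,
    ← intervalIntegral.integral_of_le hρ]
  · simp
  · filter_upwards [ae_restrict_mem measurableSet_Ioc] with s hs
    exact pow_nonneg hs.1.le _

lemma setLIntegral_Ioo_pow_le (m : ℕ) {c a : ℝ} (hc : 0 < c) :
    ∫⁻ s in Ioo 0 c⁻¹ ∩ {s | 1 - s * c < a}, ENNReal.ofReal (s ^ m) ≤
      ((m + 1 : ℕ) : ℝ≥0∞) * (ENNReal.ofReal a * ∫⁻ s in Ioo 0 c⁻¹, ENNReal.ofReal (s ^ m)) := by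
  have hsub : Ioo 0 c⁻¹ ∩ {s | 1 - s * c < a} ⊆ Ioo (c⁻¹ * (1 - a)) c⁻¹ := fun s ⟨hs, hsa⟩ => by
    have hsa : 1 - s * c < a := hsa
    refine ⟨?_, hs.2⟩
    rw [inv_mul_lt_iff₀ hc]
    linarith
  calc ∫⁻ s in Ioo 0 c⁻¹ ∩ {s | 1 - s * c < a}, ENNReal.ofReal (s ^ m)
      ≤ ∫⁻ _ in Ioo 0 c⁻¹ ∩ {s | 1 - s * c < a}, ENNReal.ofReal (c⁻¹ ^ m) := by
        refine setLIntegral_mono (by fun_prop) fun s hs => ENNReal.ofReal_le_ofReal ?_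
        exact pow_le_pow_left₀ hs.1.1.le hs.1.2.le m
    _ ≤ ENNReal.ofReal (c⁻¹ ^ m) * volume (Ioo (c⁻¹ * (1 - a)) c⁻¹) := by
        rw [setLIntegral_const]
        gcongr
    _ = ((m + 1 : ℕ) : ℝ≥0∞) *
          (ENNReal.ofReal a * ENNReal.ofReal (c⁻¹ ^ (m + 1) / (m + 1))) := by
        rw [Real.volume_Ioo, ← ENNReal.ofReal_natCast, mul_left_comm,
          ← ENNReal.ofReal_mul (by positivity), ← ENNReal.ofReal_mul (by positivity),
          ← ENNReal.ofReal_mul' (by positivity)]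
        congr 1
        push_cast
        field_simp
        rw [pow_succ]
        field_simp
        ring
    _ = _ := by rw [setLIntegral_Ioo_pow m (by positivity)]

variable {Ω : Set E} {r R t : ℝ}

lemma IsSandwiched.setLIntegral_comp_radialProj (hΩ : IsSandwiched Ω r R) {S : Set E}
    (hS : MeasurableSet S) {G : E → ℝ≥0∞} (hG : Measurable G) :
    ∫⁻ x in S, G (radialProj Ω x) ∂μ = ∫⁻ w : sphere (0 : E) 1, G (radialProj Ω w) *
      (∫⁻ s in Ioi (0 : ℝ) ∩ {s | s • (w : E) ∈ S},
        ENNReal.ofReal (s ^ (Module.finrank ℝ E - 1))) ∂μ.toSphere := by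
  rw [← lintegral_indicator hS, lintegral_eq_lintegral_toSphere μ
    (F := S.indicator fun x => G (radialProj Ω x))
    ((hG.comp hΩ.measurable_radialProj).indicator hS)]
  refine lintegral_congr fun w => ?_
  have hSw : MeasurableSet {s : ℝ | s • (w : E) ∈ S} := (by fun_prop : Measurable _) hS
  rw [inter_comm, ← Measure.restrict_restrict hSw, ← lintegral_indicator hSw,
    ← lintegral_const_mul _ (Measurable.indicator (by fun_prop) hSw)]
  refine setLIntegral_congr_fun measurableSet_Ioi fun s hs => ?_
  by_cases h : s • (w : E) ∈ S <;> simp [h, radialProj_smul hs, mul_comm]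

/-- On each ray from the origin this compares an integral over the last fraction `a` of the part of
the ray inside `Ω` with an integral over the whole part. -/
lemma IsSandwiched.setLIntegral_one_sub_gauge_lt_le (hΩ : IsSandwiched Ω r R) {a : E → ℝ}
    (ha : Measurable a) {G : E → ℝ≥0∞} (hG : Measurable G) :
    ∫⁻ x in Ω ∩ {x | 1 - gauge Ω x < a (radialProj Ω x)}, G (radialProj Ω x) ∂μ ≤
      Module.finrank ℝ E *
        ∫⁻ x in Ω, ENNReal.ofReal (a (radialProj Ω x)) * G (radialProj Ω x) ∂μ := by
  have hS : MeasurableSet {x | 1 - gauge Ω x < a (radialProj Ω x)} :=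
    measurableSet_lt (measurable_const.sub hΩ.continuous_gauge.measurable)
      (ha.comp hΩ.measurable_radialProj)
  rw [hΩ.setLIntegral_comp_radialProj μ (hΩ.isOpen.measurableSet.inter hS) hG,
    hΩ.setLIntegral_comp_radialProj μ hΩ.isOpen.measurableSet
      (G := fun q => ENNReal.ofReal (a q) * G q) (ha.ennreal_ofReal.mul hG),
    ← lintegral_const_mul' _ _ (ENNReal.natCast_ne_top _)]
  refine lintegral_mono fun w => ?_
  set c := gauge Ω (w : E)
  have hc : 0 < c := hΩ.gauge_pos_iff.2 (ne_zero_of_mem_unit_sphere w)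
  have hmem : Ioi 0 ∩ {s | s • (w : E) ∈ Ω} = Ioo 0 c⁻¹ := by
    ext s
    refine and_congr_right fun hs : 0 < s => ?_
    rw [mem_ofPred_eq, ← hΩ.gauge_lt_one_iff, gauge_smul_of_nonneg hs.le, smul_eq_mul,
      ← lt_div_iff₀ hc, one_div]
  have hmem' : Ioi 0 ∩ {s | s • (w : E) ∈ Ω ∩ {x | 1 - gauge Ω x < a (radialProj Ω x)}} =
      Ioo 0 c⁻¹ ∩ {s | 1 - s * c < a (radialProj Ω w)} := by
    rw [← hmem, inter_assoc]
    ext s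
    refine and_congr_right fun hs : 0 < s => and_congr_right fun _ => ?_
    simp only [mem_ofPred_eq, gauge_smul_of_nonneg hs.le, smul_eq_mul, radialProj_smul hs, c]
  rw [hmem, hmem']
  have hpow := setLIntegral_Ioo_pow_le (Module.finrank ℝ E - 1) (a := a (radialProj Ω w)) hc
  rw [Nat.sub_add_cancel Module.finrank_pos] at hpow
  refine (mul_le_mul_right hpow _).trans_eq ?_
  ring

lemma IsSandwiched.setLIntegral_infDist_lt_le (hΩ : IsSandwiched Ω r R) {g h : E → ℝ≥0∞}
    (hh : Measurable h) (ht : 0 < t) (ht1 : t ≤ 1)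
    (hgh : ∀ x ∈ Ω, ∀ q ∈ frontier Ω, dist x q ≤ t * R → g x ≤ h q) :
    ∫⁻ x in Ω ∩ {x | infDist x Ωᶜ < r * t}, g x ∂μ ≤
      Module.finrank ℝ E * ENNReal.ofReal (r * t) * ∫⁻ x in Ω,
        h (radialProj Ω x) / ENNReal.ofReal (supportQuotient Ω t (radialProj Ω x)) ∂μ := by
  set a : E → ℝ := fun q => r * t / supportQuotient Ω t q
  have hsubset : Ω ∩ {x | infDist x Ωᶜ < r * t} ⊆
      Ω ∩ {x | 1 - gauge Ω x < a (radialProj Ω x)} := fun x hx =>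
    ⟨hx.1, (hΩ.one_sub_gauge_lt_of_infDist_lt hΩ.compl_nonempty hx.1 ht ht1 hx.2).2.2⟩
  have hR := hΩ.outerRadius_nonneg
  have hmeas : Measurable fun x => h (radialProj Ω x) := hh.comp hΩ.measurable_radialProj
  have hpt : ∀ x ∈ Ω ∩ {x | infDist x Ωᶜ < r * t}, g x ≤ h (radialProj Ω x) := fun x hx => by
    obtain ⟨hx0, hxt, -⟩ := hΩ.one_sub_gauge_lt_of_infDist_lt hΩ.compl_nonempty hx.1 ht ht1 hx.2
    exact hgh x hx.1 _ (hΩ.radialProj_mem_frontier hx0)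
      ((hΩ.dist_radialProj_le hx.1 hx0).trans (by gcongr))
  calc ∫⁻ x in Ω ∩ {x | infDist x Ωᶜ < r * t}, g x ∂μ
      ≤ ∫⁻ x in Ω ∩ {x | infDist x Ωᶜ < r * t}, h (radialProj Ω x) ∂μ :=
        setLIntegral_mono hmeas hpt
    _ ≤ ∫⁻ x in Ω ∩ {x | 1 - gauge Ω x < a (radialProj Ω x)}, h (radialProj Ω x) ∂μ :=
        lintegral_mono_set hsubset
    _ ≤ Module.finrank ℝ E *
          ∫⁻ x in Ω, ENNReal.ofReal (a (radialProj Ω x)) * h (radialProj Ω x) ∂μ :=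
        hΩ.setLIntegral_one_sub_gauge_lt_le μ
          (measurable_const.div (measurable_supportQuotient Ω t)) hh
    _ ≤ _ := by
        rw [mul_assoc, ← lintegral_const_mul' _ _ ENNReal.ofReal_ne_top]
        refine mul_le_mul_right (lintegral_mono fun x => ?_) _
        rw [← ENNReal.mul_comm_div, mul_comm, mul_comm _ (h _)]
        gcongr
        exact ENNReal.ofReal_div_le (div_nonneg infDist_nonneg ht.le)

lemma IsSandwiched.tendsto_setLIntegral_div_supportQuotient (hΩ : IsSandwiched Ω r R)
    {h : E → ℝ≥0∞} (hh : Measurable h) {C : ℝ≥0∞} (hC : C ≠ ⊤) (hhC : ∀ q ∈ frontier Ω, h q ≤ C) :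
    Tendsto (fun k : ℕ => ∫⁻ x in Ω, h (radialProj Ω x) /
        ENNReal.ofReal (supportQuotient Ω (1 / ((k : ℝ) + 1)) (radialProj Ω x)) ∂μ) atTop
      (𝓝 (∫⁻ x in Ω, h (radialProj Ω x) /
        ENNReal.ofReal (leastSupport Ω (radialProj Ω x)) ∂μ)) := by
  have hne : ∀ᵐ x ∂μ.restrict Ω, x ≠ 0 := ae_restrict_of_ae (Measure.ae_ne μ 0)
  have hr : ENNReal.ofReal r ≠ 0 := by simpa using hΩ.pos
  refine tendsto_lintegral_of_dominated_convergence (fun _ => C / ENNReal.ofReal r)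
    (fun k => ?_) (fun k => ?_) ?_ ?_
  · exact (hh.div (measurable_supportQuotient Ω _).ennreal_ofReal).comp hΩ.measurable_radialProj
  · filter_upwards [hne] with x hx
    have hq := hΩ.radialProj_mem_frontier hx
    have := hΩ.le_supportQuotient hq (t := 1 / ((k : ℝ) + 1)) Nat.one_div_pos_of_nat
      (div_le_one_of_le₀ (by simp) (by positivity))
    gcongr
    exact hhC _ hq
  · rw [setLIntegral_const]
    exact ENNReal.mul_ne_top (ENNReal.div_ne_top hC hr) hΩ.isBounded.measure_lt_top.ne
  · filter_upwards [hne] with x hx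
    have hq := hΩ.radialProj_mem_frontier hx
    refine ENNReal.Tendsto.div tendsto_const_nhds ?_
      (ENNReal.tendsto_ofReal (hΩ.tendsto_supportQuotient hq)) ?_
    · exact Or.inr (by simpa using hΩ.pos.trans_le (hΩ.le_leastSupport hq))
    · exact Or.inr ((hhC _ hq).trans_lt hC.lt_top).ne

lemma IsSandwiched.setLIntegral_le_of_le_setLIntegral_infDist_lt (hΩ : IsSandwiched Ω r R)
    {g h : E → ℝ≥0∞} (hh : Measurable h) {C : ℝ≥0∞} (hC : C ≠ ⊤) (hhC : ∀ q ∈ frontier Ω, h q ≤ C)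
    {d : ℝ} (hd : 0 < d) (hgh : ∀ x ∈ Ω, ∀ q ∈ frontier Ω, dist x q ≤ d → g x ≤ h q)
    (hshell : ∀ ε > 0, ∫⁻ x in Ω, g x ∂μ ≤
      ENNReal.ofReal (1 + r / ε) * ∫⁻ x in Ω ∩ {x | infDist x Ωᶜ < ε}, g x ∂μ) :
    ∫⁻ x in Ω, g x ∂μ ≤ Module.finrank ℝ E * ENNReal.ofReal r *
      ∫⁻ x in Ω, h (radialProj Ω x) / ENNReal.ofReal (leastSupport Ω (radialProj Ω x)) ∂μ := by
  have hr := hΩ.pos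
  have hτ : Tendsto (fun k : ℕ => 1 / ((k : ℝ) + 1)) atTop (𝓝 0) :=
    tendsto_one_div_add_atTop_nhds_zero_nat
  have hτR : Tendsto (fun k : ℕ => 1 / ((k : ℝ) + 1) * R) atTop (𝓝 0) := by
    simpa using hτ.mul_const R
  have hfactor : Tendsto (fun k : ℕ =>
      Module.finrank ℝ E * ENNReal.ofReal (r * (1 + 1 / ((k : ℝ) + 1)))) atTop
      (𝓝 (Module.finrank ℝ E * ENNReal.ofReal r)) := by
    refine ENNReal.Tendsto.const_mul ?_ (Or.inr (ENNReal.natCast_ne_top _))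
    simpa using ENNReal.tendsto_ofReal ((hτ.const_add 1).const_mul r)
  have hlim := ENNReal.Tendsto.mul hfactor (Or.inl (by simp [hr, Module.finrank_pos.ne']))
    (hΩ.tendsto_setLIntegral_div_supportQuotient μ hh hC hhC) (Or.inr (by finiteness))
  refine ge_of_tendsto hlim ?_
  filter_upwards [hτR.eventually (ge_mem_nhds hd)] with k hk
  set t : ℝ := 1 / ((k : ℝ) + 1)
  have ht : 0 < t := Nat.one_div_pos_of_nat
  have ht1 : t ≤ 1 := div_le_one_of_le₀ (by simp) (by positivity)
  calc ∫⁻ x in Ω, g x ∂μ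
      ≤ ENNReal.ofReal (1 + r / (r * t)) * ∫⁻ x in Ω ∩ {x | infDist x Ωᶜ < r * t}, g x ∂μ :=
        hshell _ (by positivity)
    _ ≤ ENNReal.ofReal (1 + r / (r * t)) * _ :=
        mul_le_mul_right (hΩ.setLIntegral_infDist_lt_le μ hh ht ht1 fun x hx q hq hxq =>
          hgh x hx q hq (hxq.trans hk)) _
    _ = _ := by
        rw [← mul_assoc, mul_left_comm, ← ENNReal.ofReal_mul (by positivity)]
        congr 3
        field_simp
        ring

end ShellLimit

section FlatCone

open scoped Pointwise

variable {E : Type*} [NormedAddCommGroup E] [InnerProductSpace ℝ E] {A : Set E} {e : E} {h : ℝ}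

lemma Ioo_smul_inter_orthogonal (he : ‖e‖ = 1) (hh : 0 < h) (hA : ∀ q ∈ A, inner ℝ e q = h)
    (s : ℝ) :
    (Ioo (0 : ℝ) 1 • A) ∩
        (AffineSubspace.mk' (s • (h • e) +ᵥ (0 : E)) (ℝ ∙ (h • e))ᗮ : AffineSubspace ℝ E) =
      if s ∈ Ioo (0 : ℝ) 1 then s • A else ∅ := by
  have hplane : ∀ x : E,
      x ∈ AffineSubspace.mk' (s • (h • e) +ᵥ (0 : E)) (ℝ ∙ (h • e))ᗮ ↔ inner ℝ e x = s * h := by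
    intro x
    rw [AffineSubspace.mem_mk', Submodule.mem_orthogonal_singleton_iff_inner_right]
    simp only [vadd_eq_add, add_zero, vsub_eq_sub, inner_sub_right, sub_eq_zero, inner_smul_right,
      real_inner_self_eq_norm_sq, real_inner_smul_left, he, one_pow, mul_one]
    rw [← mul_assoc, mul_comm h, mul_left_inj' hh.ne']
  ext x
  simp only [mem_inter_iff, SetLike.mem_coe, hplane]
  constructor
  · rintro ⟨⟨t, ht, q, hq, rfl⟩, hx⟩
    rw [inner_smul_right, hA q hq, mul_left_inj' hh.ne'] at hx
    subst hx
    rw [if_pos ht]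
    exact smul_mem_smul_set hq
  · split_ifs with hs
    · rintro ⟨q, hq, rfl⟩
      exact ⟨smul_mem_smul hs hq, by rw [inner_smul_right, hA q hq]⟩
    · exact False.elim

lemma measurableSet_Ioo_smul [MeasurableSpace E] [BorelSpace E] [SecondCountableTopology E]
    (hh : 0 < h) (hA : MeasurableSet A) (hAe : ∀ q ∈ A, inner ℝ e q = h) :
    MeasurableSet (Ioo (0 : ℝ) 1 • A) := by
  have hpre : Ioo (0 : ℝ) 1 • A =
      {x | inner ℝ e x / h ∈ Ioo (0 : ℝ) 1} ∩ (fun x => (inner ℝ e x / h)⁻¹ • x) ⁻¹' A := by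
    ext x
    constructor
    · rintro ⟨s, hs, q, hq, rfl⟩
      have hsq : inner ℝ e (s • q) / h = s := by
        rw [inner_smul_right, hAe q hq, mul_div_cancel_right₀ _ hh.ne']
      refine ⟨by rwa [mem_ofPred_eq, hsq], ?_⟩
      rwa [mem_preimage, hsq, inv_smul_smul₀ hs.1.ne']
    · rintro ⟨hs, hq⟩
      exact ⟨_, hs, _, hq, smul_inv_smul₀ hs.1.ne' x⟩
  rw [hpre]
  exact (measurableSet_Ioo.preimage (by fun_prop)).inter (hA.preimage (by fun_prop))

lemma finrank_mul_volume_Ioo_smul [FiniteDimensional ℝ E] [Nontrivial E] [MeasurableSpace E]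
    [BorelSpace E] (he : ‖e‖ = 1) (hh : 0 < h) (hA : MeasurableSet A)
    (hAe : ∀ q ∈ A, inner ℝ e q = h) :
    Module.finrank ℝ E * volume (Ioo (0 : ℝ) 1 • A) =
      ENNReal.ofReal h * μHE[Module.finrank ℝ E - 1] A := by
  have he0 : e ≠ 0 := by
    rintro rfl
    simp at he
  have hn : 0 < Module.finrank ℝ E := Module.finrank_pos
  have hslice : ∀ s : ℝ, μHE[Module.finrank ℝ E - 1] (if s ∈ Ioo (0 : ℝ) 1 then s • A else ∅) =
      (Ioo (0 : ℝ) 1).indicator (fun s => ENNReal.ofReal (s ^ (Module.finrank ℝ E - 1)) *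
        μHE[Module.finrank ℝ E - 1] A) s := by
    intro s
    by_cases hs : s ∈ Ioo (0 : ℝ) 1
    · rw [if_pos hs, indicator_of_mem hs, Measure.euclideanHausdorffMeasure_smul₀ _ hs.1.ne',
        ENNReal.smul_def, smul_eq_mul, ENNReal.coe_pow, ENNReal.ofReal_pow hs.1.le,
        ← Real.enorm_of_nonneg hs.1.le]
      rfl
    · rw [if_neg hs, indicator_of_notMem hs, measure_empty]
  rw [← InnerProductSpace.euclideanHausdorffMeasure_eq_volume,
    EuclideanGeometry.euclideanHausdorffMeasure_eq_lintegral (0 : E) (v := h • e)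
      (smul_ne_zero hh.ne' he0) (measurableSet_Ioo_smul hh hA hAe)]
  simp only [Ioo_smul_inter_orthogonal he hh hAe, hslice]
  rw [lintegral_indicator measurableSet_Ioo, lintegral_mul_const _ (by fun_prop),
    setLIntegral_Ioo_pow _ zero_le_one, one_pow, Nat.cast_sub hn, Nat.cast_one, sub_add_cancel,
    enorm_smul, Real.enorm_of_nonneg hh.le, ← ofReal_norm, he, ENNReal.ofReal_one, mul_one,
    mul_left_comm, ← mul_assoc (Module.finrank ℝ E : ℝ≥0∞), one_div,
    ENNReal.ofReal_inv_of_pos (by positivity), ENNReal.ofReal_natCast,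
    ENNReal.mul_inv_cancel (by positivity) (ENNReal.natCast_ne_top _), one_mul]

end FlatCone

section BiLipschitz

open scoped Pointwise

lemma image_pos_smul_set {E F : Type*} [SMul ℝ E] [SMul ℝ F] {T : E → F}
    (hT : ∀ s > (0 : ℝ), ∀ x, T (s • x) = s • T x) {I : Set ℝ} (hI : I ⊆ Ioi 0) (A : Set E) :
    T '' (I • A) = I • T '' A := by
  simp only [← image2_smul, image_image2, image2_image_right]
  exact image2_congr fun s hs x _ => hT s (hI hs) x

variable {X Y : Type*} [MetricSpace X] [MeasurableSpace X] [BorelSpace X] [MetricSpace Y]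
  [MeasurableSpace Y] [BorelSpace Y] {T : X → Y} {A : Set X} {K : ℝ≥0}

lemma euclideanHausdorffMeasure_image_le (hT : LipschitzOnWith K T A) (d : ℕ) :
    μHE[d] (T '' A) ≤ (K : ℝ≥0∞) ^ d * μHE[d] A := by
  have hle := hT.hausdorffMeasure_image_le d.cast_nonneg
  rw [ENNReal.rpow_natCast] at hle
  simp only [Measure.euclideanHausdorffMeasure_def, Measure.smul_apply]
  rw [mul_smul_comm]
  gcongr

lemma le_euclideanHausdorffMeasure_image (hT : AntilipschitzWith K (A.domRestrict T)) (d : ℕ) :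
    μHE[d] A ≤ (K : ℝ≥0∞) ^ d * μHE[d] (T '' A) := by
  have hle := hT.le_hausdorffMeasure_image d.cast_nonneg univ
  have hA := (isometry_subtype_coe (s := A)).hausdorffMeasure_image (Or.inl d.cast_nonneg) univ
  rw [image_univ, Subtype.range_coe] at hA
  rw [ENNReal.rpow_natCast, image_univ, range_domRestrict, ← hA] at hle
  simp only [Measure.euclideanHausdorffMeasure_def, Measure.smul_apply]
  rw [mul_smul_comm]
  gcongr

variable {E : Type*} [NormedAddCommGroup E] {c : ℝ≥0}

lemma lipschitzOnWith_of_approximatesLinearOn_id [NormedSpace ℝ E] {T : E → E} {S : Set E}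
    (hT : ApproximatesLinearOn T (ContinuousLinearMap.id ℝ E) S c) (hK : 0 < K)
    (hc : c + K⁻¹ ≤ 1) : LipschitzOnWith K T S := by
  refine LipschitzOnWith.of_dist_le_mul fun x hx y hy => ?_
  have hcK : 1 + (c : ℝ) ≤ K := by
    have hK' : (0 : ℝ) < K := hK
    have hcK' : (c : ℝ) * K + 1 ≤ K := by
      rw [← mul_inv_cancel₀ hK'.ne', mul_comm (c : ℝ), ← mul_add]
      exact mul_le_of_le_one_right hK'.le (mod_cast hc)
    nlinarith [mul_nonneg c.coe_nonneg c.coe_nonneg, c.coe_nonneg]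
  have hxy := hT x hx y hy
  have htri := norm_le_norm_add_norm_sub' (T x - T y) (x - y)
  rw [ContinuousLinearMap.id_apply] at hxy
  rw [dist_eq_norm, dist_eq_norm]
  calc ‖T x - T y‖ ≤ (1 + c) * ‖x - y‖ := by linarith
    _ ≤ K * ‖x - y‖ := by gcongr

lemma antilipschitzWith_of_approximatesLinearOn_id [NormedSpace ℝ E] {T : E → E}
    {S : Set E} (hT : ApproximatesLinearOn T (ContinuousLinearMap.id ℝ E) S c)
    (hK : 0 < K) (hc : c + K⁻¹ ≤ 1) : AntilipschitzWith K (S.domRestrict T) := by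
  refine AntilipschitzWith.of_le_mul_dist fun x y => ?_
  have hc' : (K : ℝ)⁻¹ ≤ 1 - c := by
    rw [le_sub_iff_add_le']
    exact_mod_cast hc
  have hxy := hT x x.2 y y.2
  have htri := norm_le_norm_add_norm_sub (T x - T y) ((x : E) - y)
  rw [ContinuousLinearMap.id_apply] at hxy
  rw [← inv_mul_le_iff₀ (by exact_mod_cast hK), Subtype.dist_eq, dist_eq_norm, dist_eq_norm]
  calc (K : ℝ)⁻¹ * ‖(x : E) - y‖ ≤ (1 - c) * ‖(x : E) - y‖ := by gcongr
    _ ≤ ‖T x - T y‖ := by linarith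

variable [InnerProductSpace ℝ E] [FiniteDimensional ℝ E] [MeasurableSpace E] [BorelSpace E]
  {T : E → E} {A : Set E} {e : E} {h : ℝ}

lemma measurableSet_image_of_approximatesLinearOn_id (hA : MeasurableSet A)
    (hT : ApproximatesLinearOn T (ContinuousLinearMap.id ℝ E) A c) (hK : 0 < K)
    (hc : c + K⁻¹ ≤ 1) : MeasurableSet (T '' A) :=
  hA.image_of_continuousOn_injOn hT.continuousOn
    (injOn_iff_injective.2 (antilipschitzWith_of_approximatesLinearOn_id hT hK hc).injective)

variable [Nontrivial E]

lemma finrank_mul_volume_image_Ioo_smul (hT : ∀ s > (0 : ℝ), ∀ x, T (s • x) = s • T x)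
    (hTA : MeasurableSet (T '' A)) (he : ‖e‖ = 1) (hh : 0 < h)
    (hTe : ∀ q ∈ A, inner ℝ e (T q) = h) :
    Module.finrank ℝ E * volume (T '' (Ioo (0 : ℝ) 1 • A)) =
      ENNReal.ofReal h * μHE[Module.finrank ℝ E - 1] (T '' A) := by
  rw [image_pos_smul_set hT Ioo_subset_Ioi_self]
  exact finrank_mul_volume_Ioo_smul he hh hTA (forall_mem_image.2 hTe)

lemma finrank_mul_volume_Ioo_smul_le (hT : ∀ s > (0 : ℝ), ∀ x, T (s • x) = s • T x)
    (hA : MeasurableSet A)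
    (hTi : ApproximatesLinearOn T (ContinuousLinearMap.id ℝ E) (Ioi (0 : ℝ) • A) c) (hK : 0 < K)
    (hc : c + K⁻¹ ≤ 1) (he : ‖e‖ = 1) (hh : 0 < h)
    (hTe : ∀ q ∈ A, inner ℝ e (T q) = h) :
    Module.finrank ℝ E * volume (Ioo (0 : ℝ) 1 • A) ≤
      (K : ℝ≥0∞) ^ (Module.finrank ℝ E + (Module.finrank ℝ E - 1)) *
        (ENNReal.ofReal h * μHE[Module.finrank ℝ E - 1] A) := by
  have hsub : A ⊆ Ioi (0 : ℝ) • A := fun q hq => ⟨1, mem_Ioi.2 one_pos, q, hq, one_smul ℝ q⟩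
  have hIoo : Ioo (0 : ℝ) 1 • A ⊆ Ioi (0 : ℝ) • A := smul_subset_smul_right Ioo_subset_Ioi_self
  have hTA := measurableSet_image_of_approximatesLinearOn_id hA (hTi.mono_set hsub) hK hc
  have hvol := le_euclideanHausdorffMeasure_image
    (antilipschitzWith_of_approximatesLinearOn_id (hTi.mono_set hIoo) hK hc) (Module.finrank ℝ E)
  have harea := euclideanHausdorffMeasure_image_le
    (lipschitzOnWith_of_approximatesLinearOn_id (hTi.mono_set hsub) hK hc) (Module.finrank ℝ E - 1)
  rw [InnerProductSpace.euclideanHausdorffMeasure_eq_volume] at hvol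
  set n := Module.finrank ℝ E
  calc n * volume (Ioo (0 : ℝ) 1 • A)
      ≤ n * (K ^ n * volume (T '' (Ioo (0 : ℝ) 1 • A))) := by gcongr
    _ = K ^ n * (ENNReal.ofReal h * μHE[n - 1] (T '' A)) := by
        rw [mul_left_comm, finrank_mul_volume_image_Ioo_smul hT hTA he hh hTe]
    _ ≤ K ^ n * (ENNReal.ofReal h * (K ^ (n - 1) * μHE[n - 1] A)) := by gcongr
    _ = K ^ (n + (n - 1)) * (ENNReal.ofReal h * μHE[n - 1] A) := by ring

lemma ofReal_mul_euclideanHausdorffMeasure_le (hT : ∀ s > (0 : ℝ), ∀ x, T (s • x) = s • T x)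
    (hA : MeasurableSet A)
    (hTi : ApproximatesLinearOn T (ContinuousLinearMap.id ℝ E) (Ioi (0 : ℝ) • A) c) (hK : 0 < K)
    (hc : c + K⁻¹ ≤ 1) (he : ‖e‖ = 1) (hh : 0 < h)
    (hTe : ∀ q ∈ A, inner ℝ e (T q) = h) :
    ENNReal.ofReal h * μHE[Module.finrank ℝ E - 1] A ≤
      (K : ℝ≥0∞) ^ (Module.finrank ℝ E + (Module.finrank ℝ E - 1)) *
        (Module.finrank ℝ E * volume (Ioo (0 : ℝ) 1 • A)) := by
  have hsub : A ⊆ Ioi (0 : ℝ) • A := fun q hq => ⟨1, mem_Ioi.2 one_pos, q, hq, one_smul ℝ q⟩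
  have hIoo : Ioo (0 : ℝ) 1 • A ⊆ Ioi (0 : ℝ) • A := smul_subset_smul_right Ioo_subset_Ioi_self
  have hTA := measurableSet_image_of_approximatesLinearOn_id hA (hTi.mono_set hsub) hK hc
  have hvol := euclideanHausdorffMeasure_image_le
    (lipschitzOnWith_of_approximatesLinearOn_id (hTi.mono_set hIoo) hK hc) (Module.finrank ℝ E)
  have harea := le_euclideanHausdorffMeasure_image
    (antilipschitzWith_of_approximatesLinearOn_id (hTi.mono_set hsub) hK hc)
    (Module.finrank ℝ E - 1)
  rw [InnerProductSpace.euclideanHausdorffMeasure_eq_volume] at hvol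
  set n := Module.finrank ℝ E
  calc ENNReal.ofReal h * μHE[n - 1] A
      ≤ ENNReal.ofReal h * (K ^ (n - 1) * μHE[n - 1] (T '' A)) := by gcongr
    _ = K ^ (n - 1) * (n * volume (T '' (Ioo (0 : ℝ) 1 • A))) := by
        rw [mul_left_comm, finrank_mul_volume_image_Ioo_smul hT hTA he hh hTe]
    _ ≤ K ^ (n - 1) * (n * (K ^ n * volume (Ioo (0 : ℝ) 1 • A))) := by gcongr
    _ = K ^ (n + (n - 1)) * (n * volume (Ioo (0 : ℝ) 1 • A)) := by ring

end BiLipschitz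

section NormalCell

open scoped Pointwise

variable {E : Type*} [NormedAddCommGroup E] [InnerProductSpace ℝ E] {Ω : Set E}
  {r R θ h s t : ℝ} {e q q' : E} {K : ℝ≥0}

/-- The boundary points of `Ω` with an outer unit normal within `θ` of `e` whose support value is
nearly `h`. On the cone over such a cell `flatten Ω e h` is close to the identity. -/
def normalCell (Ω : Set E) (θ : ℝ) (e : E) (h : ℝ) : Set E :=
  {q ∈ frontier Ω | ∃ ν, IsOuterNormal Ω q ν ∧ ‖ν - e‖ ≤ θ} ∩
    {q | |inner ℝ e q - h| ≤ θ ∧ h * (1 - θ) ≤ leastSupport Ω q}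

/-- The positively homogeneous map which moves each boundary point of `Ω` in the direction of the
unit vector `e` onto the hyperplane `⟪e, ·⟫ = h`. -/
noncomputable def flatten (Ω : Set E) (e : E) (h : ℝ) (x : E) : E :=
  x + (h * gauge Ω x - inner ℝ e x) • e

lemma flatten_smul (hs : 0 < s) (x : E) : flatten Ω e h (s • x) = s • flatten Ω e h x := by
  simp only [flatten, gauge_smul_of_nonneg hs.le, inner_smul_right, smul_add, smul_smul,
    smul_eq_mul]
  congr 2
  ring

lemma inner_flatten (he : ‖e‖ = 1) (x : E) : inner ℝ e (flatten Ω e h x) = h * gauge Ω x := by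
  rw [flatten, inner_add_right, inner_smul_right, real_inner_self_eq_norm_sq, he]
  ring

lemma measurableSet_normalCell [FiniteDimensional ℝ E] [MeasurableSpace E] [BorelSpace E]
    (Ω : Set E) (θ : ℝ) (e : E) (h : ℝ) : MeasurableSet (normalCell Ω θ e h) := by
  have := FiniteDimensional.proper ℝ E
  have hsupport : MeasurableSet {q | |inner ℝ e q - h| ≤ θ ∧ h * (1 - θ) ≤ leastSupport Ω q} := by
    rw [ofPred_and]
    exact (measurableSet_le (by fun_prop) measurable_const).inter
      (measurableSet_le measurable_const (measurable_leastSupport Ω))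
  set P : Set (E × sphere (0 : E) 1) :=
    {p | p.1 ∈ frontier Ω ∧ (∀ y ∈ closure Ω, inner ℝ (p.2 : E) y ≤ inner ℝ (p.2 : E) p.1) ∧
      ‖(p.2 : E) - e‖ ≤ θ}
  have hP : IsClosed P := by
    refine (isClosed_frontier.preimage continuous_fst).and (IsClosed.and ?_ ?_)
    · simp only [ofPred_forall]
      exact isClosed_biInter fun y _ => isClosed_le (by fun_prop) (by fun_prop)
    · exact isClosed_le (by fun_prop) continuous_const
  have himage : {q ∈ frontier Ω | ∃ ν, IsOuterNormal Ω q ν ∧ ‖ν - e‖ ≤ θ} = Prod.fst '' P := by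
    ext q
    constructor
    · rintro ⟨hq, ν, hν, hνe⟩
      exact ⟨(q, ⟨ν, by simp [hν.norm_eq_one]⟩), ⟨hq, hν.inner_le, hνe⟩, rfl⟩
    · rintro ⟨⟨q, ν⟩, ⟨hq, hν, hνe⟩, rfl⟩
      exact ⟨hq, ν, ⟨by simp, hν⟩, hνe⟩
  rw [normalCell, himage]
  exact (isClosedMap_fst_of_compactSpace P hP).measurableSet.inter hsupport

lemma IsSandwiched.exists_frontier_subset_iUnion_normalCell [FiniteDimensional ℝ E] [Nontrivial E]
    (hΩ : IsSandwiched Ω r R) (hθ : 0 < θ) :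
    ∃ u : ℕ → sphere (0 : E) 1 × ℝ, frontier Ω ⊆ ⋃ k, normalCell Ω θ (u k).1 (u k).2 := by
  have := (NormedSpace.sphere_nonempty (x := (0 : E))).2 zero_le_one
  have : Nonempty (sphere (0 : E) 1) := this.to_subtype
  refine ⟨TopologicalSpace.denseSeq _, fun q hq => mem_iUnion.2 ?_⟩
  obtain ⟨ν, hν, hνq⟩ := hΩ.exists_isOuterNormal_inner_le hq
  set U : Set (sphere (0 : E) 1 × ℝ) := {p | ‖ν - p.1‖ < θ} ∩
    ({p | |inner ℝ (p.1 : E) q - p.2| < θ} ∩ {p | p.2 * (1 - θ) < leastSupport Ω q})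
  have hU : IsOpen U := (isOpen_lt (by fun_prop) continuous_const).inter
    ((isOpen_lt (by fun_prop) continuous_const).inter (isOpen_lt (by fun_prop) continuous_const))
  have hνU : (⟨⟨ν, by simp [hν.norm_eq_one]⟩, inner ℝ ν q⟩ : sphere (0 : E) 1 × ℝ) ∈ U := by
    refine ⟨by simpa using hθ, by simpa using hθ, ?_⟩
    have := mul_pos (hΩ.pos.trans_le (hν.le_inner hΩ)) hθ
    simp only [mem_ofPred_eq]
    linarith
  obtain ⟨k, hk⟩ := (TopologicalSpace.denseRange_denseSeq _).exists_mem_open hU ⟨_, hνU⟩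
  exact ⟨k, ⟨hq, ν, hν, hk.1.le⟩, hk.2.1.le, hk.2.2.le⟩

lemma abs_inner_sub_inner_le_of_mem_normalCell (hq : q ∈ normalCell Ω θ e h)
    (hq' : q' ∈ normalCell Ω θ e h) : |inner ℝ e q - inner ℝ e q'| ≤ θ * ‖q - q'‖ := by
  have hone : ∀ p ∈ normalCell Ω θ e h, ∀ q ∈ normalCell Ω θ e h,
      inner ℝ e p - inner ℝ e q ≤ θ * ‖p - q‖ := by
    rintro p hp q ⟨⟨-, ν, hν, hνe⟩, -⟩
    calc inner ℝ e p - inner ℝ e q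
        = inner ℝ (e - ν) (p - q) + (inner ℝ ν p - inner ℝ ν q) := by
          simp only [inner_sub_left, inner_sub_right]
          ring
      _ ≤ ‖e - ν‖ * ‖p - q‖ + 0 := by
          gcongr
          · exact real_inner_le_norm _ _
          · exact sub_nonpos.2 (hν.inner_le p (frontier_subset_closure hp.1.1))
      _ ≤ θ * ‖p - q‖ := by
          rw [add_zero, norm_sub_rev]
          gcongr
  rw [abs_le', neg_sub]
  exact ⟨hone q hq q' hq', norm_sub_rev q q' ▸ hone q' hq' q hq⟩

lemma IsSandwiched.abs_sub_le_norm_smul_sub_smul_div (hΩ : IsSandwiched Ω r R)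
    (hq : q ∈ frontier Ω) (hq' : q' ∈ frontier Ω) (hs : 0 ≤ s) (ht : 0 ≤ t) :
    |s - t| ≤ ‖s • q - t • q'‖ / r := by
  have hlip := (hΩ.convex.lipschitzWith_gauge (r := ⟨r, hΩ.pos.le⟩) hΩ.pos
    hΩ.ball_subset).dist_le_mul (s • q) (t • q')
  rw [gauge_smul_of_nonneg hs, gauge_smul_of_nonneg ht, hΩ.gauge_eq_one_iff.2 hq,
    hΩ.gauge_eq_one_iff.2 hq', smul_eq_mul, smul_eq_mul, mul_one, mul_one, Real.dist_eq,
    dist_eq_norm] at hlip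
  rwa [div_eq_inv_mul]

lemma IsSandwiched.mul_norm_sub_le (hΩ : IsSandwiched Ω r R)
    (hq : q ∈ frontier Ω) (hq' : q' ∈ frontier Ω) (hs : 0 ≤ s) (ht : 0 ≤ t) :
    t * ‖q - q'‖ ≤ (1 + R / r) * ‖s • q - t • q'‖ := by
  have hr := hΩ.pos
  calc t * ‖q - q'‖ = ‖(s • q - t • q') - (s - t) • q‖ := by
        rw [← Real.norm_of_nonneg ht, ← norm_smul, Real.norm_of_nonneg ht]
        congr 1
        module
    _ ≤ ‖s • q - t • q'‖ + |s - t| * ‖q‖ := by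
        rw [← Real.norm_eq_abs, ← norm_smul]
        exact norm_sub_le _ _
    _ ≤ ‖s • q - t • q'‖ + ‖s • q - t • q'‖ / r * R := by
        gcongr
        · exact hΩ.abs_sub_le_norm_smul_sub_smul_div hq hq' hs ht
        · exact hΩ.norm_le (frontier_subset_closure hq)
    _ = (1 + R / r) * ‖s • q - t • q'‖ := by ring

lemma IsSandwiched.approximatesLinearOn_flatten {c : ℝ≥0} (hΩ : IsSandwiched Ω r R) (hθ : 0 ≤ θ)
    (he : ‖e‖ = 1) (hc : (c : ℝ) = θ * (1 / r + 1 + R / r)) :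
    ApproximatesLinearOn (flatten Ω e h) (ContinuousLinearMap.id ℝ E)
      (Ioi (0 : ℝ) • normalCell Ω θ e h) c := by
  rintro _ ⟨s, hs, q, hq, rfl⟩ _ ⟨t, ht, q', hq', rfl⟩
  have hs : 0 < s := hs
  have ht : 0 < t := ht
  have hdefect : flatten Ω e h (s • q) - flatten Ω e h (t • q') -
      ContinuousLinearMap.id ℝ E (s • q - t • q') =
      ((s - t) * (h - inner ℝ e q) - t * (inner ℝ e q - inner ℝ e q')) • e := by
    simp only [flatten, gauge_smul_of_nonneg hs.le, gauge_smul_of_nonneg ht.le,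
      hΩ.gauge_eq_one_iff.2 hq.1.1, hΩ.gauge_eq_one_iff.2 hq'.1.1, inner_smul_right, smul_eq_mul,
      mul_one, ContinuousLinearMap.id_apply]
    module
  rw [hdefect, norm_smul, he, mul_one, Real.norm_eq_abs]
  change _ ≤ c * ‖s • q - t • q'‖
  set d := ‖s • q - t • q'‖
  calc |(s - t) * (h - inner ℝ e q) - t * (inner ℝ e q - inner ℝ e q')|
      ≤ |s - t| * |inner ℝ e q - h| + t * |inner ℝ e q - inner ℝ e q'| := by
        rw [abs_sub_comm _ h, ← abs_mul]
        nth_rw 4 [← abs_of_pos ht]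
        rw [← abs_mul]
        exact abs_sub _ _
    _ ≤ d / r * θ + t * (θ * ‖q - q'‖) := by
        gcongr
        · exact div_nonneg (norm_nonneg _) hΩ.pos.le
        · exact hΩ.abs_sub_le_norm_smul_sub_smul_div hq.1.1 hq'.1.1 hs.le ht.le
        · exact hq.2.1
        · exact abs_inner_sub_inner_le_of_mem_normalCell hq hq'
    _ = d / r * θ + θ * (t * ‖q - q'‖) := by ring
    _ ≤ d / r * θ + θ * ((1 + R / r) * d) := by
        gcongr _ + θ * ?_
        exact hΩ.mul_norm_sub_le hq.1.1 hq'.1.1 hs.le ht.le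
    _ = c * d := by
        rw [hc]
        ring

lemma IsSandwiched.approximatesLinearOn_flatten_of_subset {A : Set E} (hΩ : IsSandwiched Ω r R)
    (hθ : 0 ≤ θ) (hθK : θ * (1 / r + 1 + R / r) + (K : ℝ)⁻¹ ≤ 1) (he : ‖e‖ = 1)
    (hAC : A ⊆ normalCell Ω θ e h) :
    ∃ c : ℝ≥0, c + K⁻¹ ≤ 1 ∧ ApproximatesLinearOn (flatten Ω e h) (ContinuousLinearMap.id ℝ E)
      (Ioi (0 : ℝ) • A) c := by
  have hr := hΩ.pos
  have hR := hΩ.outerRadius_nonneg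
  set c : ℝ≥0 := ⟨θ * (1 / r + 1 + R / r), by positivity⟩
  exact ⟨c, by exact_mod_cast hθK, (hΩ.approximatesLinearOn_flatten hθ he rfl).mono_set
    (smul_subset_smul_left hAC)⟩

lemma IsSandwiched.le_mul_of_mem_normalCell (hΩ : IsSandwiched Ω r R) (hK : 0 < K)
    (hθ : 0 ≤ θ) (hθK : θ * (1 / r + 1 + R / r) + (K : ℝ)⁻¹ ≤ 1) (hq : q ∈ normalCell Ω θ e h) :
    r ≤ K * h := by
  obtain ⟨⟨hqΩ, ν, hν, hνe⟩, hqe, -⟩ := hq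
  have hr := hΩ.pos
  have hνq : inner ℝ (ν - e) q ≤ θ * R :=
    (real_inner_le_norm _ _).trans (by gcongr; exact hΩ.norm_le (frontier_subset_closure hqΩ))
  have hrh : r * (1 - θ * (1 / r + 1 + R / r)) ≤ h := by
    have := hν.le_inner hΩ
    have : r * (1 - θ * (1 / r + 1 + R / r)) = r - θ - r * θ - θ * R := by
      field_simp
      ring
    rw [inner_sub_left] at hνq
    linarith [(abs_le.1 hqe).2, mul_nonneg hr.le hθ]
  rw [← inv_mul_le_iff₀ (mod_cast hK), mul_comm]
  refine le_trans ?_ hrh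
  gcongr
  linarith

lemma IsSandwiched.le_mul_leastSupport_of_mem_normalCell (hΩ : IsSandwiched Ω r R) (hK : 0 < K)
    (hθ : 0 ≤ θ) (hθK : θ * (1 / r + 1 + R / r) + (K : ℝ)⁻¹ ≤ 1) (hh : 0 ≤ h)
    (hq : q ∈ normalCell Ω θ e h) : h ≤ K * leastSupport Ω q := by
  have hθ1 : θ ≤ θ * (1 / r + 1 + R / r) := by
    have hR := hΩ.outerRadius_nonneg
    have hr := hΩ.pos
    refine le_mul_of_one_le_right hθ ?_
    have : 0 ≤ 1 / r := by positivity
    have : 0 ≤ R / r := by positivity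
    linarith
  rw [← inv_mul_le_iff₀ (mod_cast hK), mul_comm]
  refine le_trans ?_ hq.2.2
  gcongr
  linarith

end NormalCell

section ConeMeasure

open scoped Pointwise

lemma measure_le_of_subset_iUnion {α : Type*} [MeasurableSpace α] {μ ν : Measure α}
    {C : ℕ → Set α} {S : Set α} (hC : ∀ k, MeasurableSet (C k))
    (hle : ∀ k, ∀ A ⊆ C k, MeasurableSet A → μ A ≤ ν A) (hS : MeasurableSet S)
    (hSC : S ⊆ ⋃ k, C k) : μ S ≤ ν S := by
  have hpieces : ⋃ k, S ∩ disjointed C k = S := by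
    rw [← inter_iUnion, iUnion_disjointed, inter_eq_left.2 hSC]
  have hmeas : ∀ k, MeasurableSet (S ∩ disjointed C k) := fun k =>
    hS.inter (MeasurableSet.disjointed hC k)
  have hdisj : Pairwise (Function.onFun Disjoint fun k => S ∩ disjointed C k) := fun i j hij =>
    (disjoint_disjointed C hij).mono inter_subset_right inter_subset_right
  rw [← hpieces, measure_iUnion hdisj hmeas, measure_iUnion hdisj hmeas]
  exact ENNReal.tsum_le_tsum fun k =>
    hle k _ (inter_subset_right.trans (disjointed_subset C k)) (hmeas k)

lemma le_of_forall_one_lt_le_pow_mul {a b : ℝ≥0∞} {m : ℕ}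
    (hab : ∀ K : ℝ≥0, 1 < K → a ≤ (K : ℝ≥0∞) ^ m * b) : a ≤ b := by
  have hlim : Tendsto (fun K : ℝ≥0 => (K : ℝ≥0∞) ^ m * b) (𝓝[>] 1) (𝓝 b) := by
    have hpow : Tendsto (fun K : ℝ≥0 => (K : ℝ≥0∞) ^ m) (𝓝[>] 1) (𝓝 1) := by
      have : ContinuousAt (fun K : ℝ≥0 => ((K ^ m : ℝ≥0) : ℝ≥0∞)) 1 := by fun_prop
      simpa using this.tendsto.mono_left nhdsWithin_le_nhds
    simpa using ENNReal.Tendsto.mul_const hpow (Or.inl one_ne_zero)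
  exact ge_of_tendsto hlim (eventually_nhdsWithin_of_forall hab)

/-- The cone measure on the boundary of `Ω`: a set has the volume of the cone over it. -/
noncomputable def coneMeasure {E : Type*} [NormedAddCommGroup E] [NormedSpace ℝ E]
    [MeasureSpace E] (Ω : Set E) : Measure E :=
  (volume.restrict Ω).map (radialProj Ω)

variable {E : Type*} [NormedAddCommGroup E] [InnerProductSpace ℝ E] [FiniteDimensional ℝ E]
  [MeasurableSpace E] [BorelSpace E] {Ω A : Set E} {r R θ h : ℝ} {e : E} {K : ℝ≥0}

namespace IsSandwiched

lemma coneMeasure_apply (hΩ : IsSandwiched Ω r R) (hA : MeasurableSet A)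
    (hAΩ : A ⊆ frontier Ω) : coneMeasure Ω A = volume (Ioo (0 : ℝ) 1 • A) := by
  have hcone : radialProj Ω ⁻¹' A ∩ Ω = Ioo (0 : ℝ) 1 • A := by
    ext x
    constructor
    · rintro ⟨hx, hxΩ⟩
      have hx0 : x ≠ 0 := by
        rintro rfl
        exact hΩ.notMem_of_mem_frontier (hAΩ hx) (by simpa [radialProj] using hΩ.zero_mem)
      exact ⟨gauge Ω x, ⟨hΩ.gauge_pos_iff.2 hx0, hΩ.gauge_lt_one_iff.2 hxΩ⟩, _, hx,
        hΩ.gauge_smul_radialProj x⟩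
    · rintro ⟨s, hs, q, hq, rfl⟩
      have hgauge := hΩ.gauge_eq_one_iff.2 (hAΩ hq)
      refine ⟨?_, hΩ.gauge_lt_one_iff.1 ?_⟩
      · rwa [mem_preimage, radialProj_smul hs.1, radialProj, hgauge, inv_one, one_smul]
      · rw [gauge_smul_of_nonneg hs.1.le, hgauge, smul_eq_mul, mul_one]
        exact hs.2
  rw [coneMeasure, Measure.map_apply hΩ.measurable_radialProj hA,
    Measure.restrict_apply (hΩ.measurable_radialProj hA), hcone]

lemma withDensity_inv_leastSupport_le (hΩ : IsSandwiched Ω r R) (hK : 0 < K) (hθ : 0 ≤ θ)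
    (hθK : θ * (1 / r + 1 + R / r) + (K : ℝ)⁻¹ ≤ 1) (hh : 0 < h) (hA : MeasurableSet A)
    (hAC : A ⊆ normalCell Ω θ e h) :
    (coneMeasure Ω).withDensity (fun q => (ENNReal.ofReal (leastSupport Ω q))⁻¹) A ≤
      K * (ENNReal.ofReal h)⁻¹ * coneMeasure Ω A := by
  rw [withDensity_apply _ hA, ← setLIntegral_const]
  refine setLIntegral_mono measurable_const fun p hp => ?_
  have hhp := hΩ.le_mul_leastSupport_of_mem_normalCell hK hθ hθK hh.le (hAC hp)
  have hpos := hΩ.pos.trans_le (hΩ.le_leastSupport (hAC hp).1.1)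
  rw [← ENNReal.ofReal_coe_nnreal, ← ENNReal.ofReal_inv_of_pos hh,
    ← ENNReal.ofReal_inv_of_pos hpos, ← ENNReal.ofReal_mul K.coe_nonneg, ← div_eq_mul_inv]
  refine ENNReal.ofReal_le_ofReal ?_
  rwa [le_div_iff₀ hh, inv_mul_le_iff₀ hpos, mul_comm]

variable [Nontrivial E]

lemma ae_coneMeasure_mem_frontier (hΩ : IsSandwiched Ω r R) :
    ∀ᵐ q ∂coneMeasure Ω, q ∈ frontier Ω := by
  have hne : ∀ᵐ x ∂volume.restrict Ω, x ≠ (0 : E) :=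
    ae_restrict_of_ae (compl_mem_ae_iff.2 (measure_singleton 0))
  refine (ae_map_iff hΩ.measurable_radialProj.aemeasurable
    isClosed_frontier.measurableSet).2 (hne.mono fun x => hΩ.radialProj_mem_frontier)

lemma finrank_mul_coneMeasure_le (hΩ : IsSandwiched Ω r R) (hK : 0 < K)
    (hθ : 0 ≤ θ) (hθK : θ * (1 / r + 1 + R / r) + (K : ℝ)⁻¹ ≤ 1) (he : ‖e‖ = 1) (hh : 0 < h)
    (hA : MeasurableSet A) (hAC : A ⊆ normalCell Ω θ e h) :
    Module.finrank ℝ E * coneMeasure Ω A ≤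
      (K : ℝ≥0∞) ^ (Module.finrank ℝ E + (Module.finrank ℝ E - 1)) *
        (ENNReal.ofReal h * μHE[Module.finrank ℝ E - 1] A) := by
  obtain ⟨c, hc, happrox⟩ := hΩ.approximatesLinearOn_flatten_of_subset hθ hθK he hAC
  rw [hΩ.coneMeasure_apply hA fun q hq => (hAC hq).1.1]
  refine finrank_mul_volume_Ioo_smul_le (fun s hs x => flatten_smul hs x) hA happrox hK hc he hh
    fun q hq => ?_
  rw [inner_flatten he, hΩ.gauge_eq_one_iff.2 (hAC hq).1.1, mul_one]

lemma ofReal_mul_euclideanHausdorffMeasure_le (hΩ : IsSandwiched Ω r R) (hK : 0 < K)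
    (hθ : 0 ≤ θ) (hθK : θ * (1 / r + 1 + R / r) + (K : ℝ)⁻¹ ≤ 1) (he : ‖e‖ = 1) (hh : 0 < h)
    (hA : MeasurableSet A) (hAC : A ⊆ normalCell Ω θ e h) :
    ENNReal.ofReal h * μHE[Module.finrank ℝ E - 1] A ≤
      (K : ℝ≥0∞) ^ (Module.finrank ℝ E + (Module.finrank ℝ E - 1)) *
        (Module.finrank ℝ E * coneMeasure Ω A) := by
  obtain ⟨c, hc, happrox⟩ := hΩ.approximatesLinearOn_flatten_of_subset hθ hθK he hAC
  rw [hΩ.coneMeasure_apply hA fun q hq => (hAC hq).1.1]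
  refine HermiteHadamard.ofReal_mul_euclideanHausdorffMeasure_le (fun s hs x => flatten_smul hs x)
    hA happrox hK hc he hh fun q hq => ?_
  rw [inner_flatten he, hΩ.gauge_eq_one_iff.2 (hAC hq).1.1, mul_one]

/-- The comparison constant on a cell tends to `1` with the size of the cell. -/
lemma restrict_frontier_le_of_forall_normalCell {μ ν : Measure E} {m : ℕ}
    (hΩ : IsSandwiched Ω r R)
    (hle : ∀ K : ℝ≥0, 1 < K → ∀ θ : ℝ, 0 ≤ θ → θ * (1 / r + 1 + R / r) + (K : ℝ)⁻¹ ≤ 1 →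
      ∀ (e : E) (h : ℝ), ‖e‖ = 1 → ∀ A ⊆ normalCell Ω θ e h, MeasurableSet A →
        μ A ≤ (K : ℝ≥0∞) ^ m * ν A) :
    μ.restrict (frontier Ω) ≤ ν.restrict (frontier Ω) := by
  refine Measure.le_iff.2 fun S hS => ?_
  rw [Measure.restrict_apply hS, Measure.restrict_apply hS]
  refine le_of_forall_one_lt_le_pow_mul (m := m) fun K hK => ?_
  have hr := hΩ.pos
  have hR := hΩ.outerRadius_nonneg
  have hβ : 0 < 1 / r + 1 + R / r := by positivity
  have hK' : (K : ℝ)⁻¹ < 1 := inv_lt_one_of_one_lt₀ (mod_cast hK)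
  set θ := (1 - (K : ℝ)⁻¹) / (1 / r + 1 + R / r)
  have hθ : 0 < θ := div_pos (sub_pos.2 hK') hβ
  have hθK : θ * (1 / r + 1 + R / r) + (K : ℝ)⁻¹ ≤ 1 := by
    rw [div_mul_cancel₀ _ hβ.ne', sub_add_cancel]
  obtain ⟨u, hu⟩ := hΩ.exists_frontier_subset_iUnion_normalCell hθ
  have := measure_le_of_subset_iUnion (μ := μ) (ν := (K : ℝ≥0∞) ^ m • ν)
    (fun k => measurableSet_normalCell Ω θ (u k).1 (u k).2)
    (fun k A hAC hA => hle K hK θ hθ.le hθK _ _ (by simp) A hAC hA)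
    (hS.inter isClosed_frontier.measurableSet) (inter_subset_right.trans hu)
  simpa using this

lemma ofReal_smul_restrict_frontier_le (hΩ : IsSandwiched Ω r R) :
    ENNReal.ofReal r • μHE[Module.finrank ℝ E - 1].restrict (frontier Ω) ≤
      (Module.finrank ℝ E : ℝ≥0∞) • coneMeasure Ω := by
  have hle := hΩ.restrict_frontier_le_of_forall_normalCell
    (μ := ENNReal.ofReal r • μHE[Module.finrank ℝ E - 1])
    (ν := (Module.finrank ℝ E : ℝ≥0∞) • coneMeasure Ω) (m := 2 * Module.finrank ℝ E) ?_
  · rw [Measure.restrict_smul, Measure.restrict_smul,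
      Measure.restrict_eq_self_of_ae_mem hΩ.ae_coneMeasure_mem_frontier] at hle
    exact hle
  intro K hK θ hθ hθK e h he A hAC hA
  have hK0 : 0 < K := one_pos.trans hK
  rcases A.eq_empty_or_nonempty with rfl | ⟨q, hq⟩
  · simp
  have hrh : r ≤ K * h := hΩ.le_mul_of_mem_normalCell hK0 hθ hθK (hAC hq)
  have hh : 0 < h := pos_of_mul_pos_right (hΩ.pos.trans_le hrh) K.coe_nonneg
  simp only [Measure.smul_apply, smul_eq_mul]
  set n := Module.finrank ℝ E
  have hn : n + (n - 1) + 1 = 2 * n := by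
    have : 0 < n := Module.finrank_pos
    lia
  calc ENNReal.ofReal r * μHE[n - 1] A
      ≤ K * (ENNReal.ofReal h * μHE[n - 1] A) := by
        rw [← mul_assoc, ← ENNReal.ofReal_coe_nnreal, ← ENNReal.ofReal_mul K.coe_nonneg]
        gcongr
    _ ≤ K * (K ^ (n + (n - 1)) * (n * coneMeasure Ω A)) := by
        gcongr K * ?_
        exact hΩ.ofReal_mul_euclideanHausdorffMeasure_le hK0 hθ hθK he hh hA hAC
    _ = K ^ (2 * n) * (n * coneMeasure Ω A) := by
        rw [← hn, pow_succ' _ (n + (n - 1)), mul_assoc]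

lemma finrank_smul_withDensity_le (hΩ : IsSandwiched Ω r R) :
    (Module.finrank ℝ E : ℝ≥0∞) •
        (coneMeasure Ω).withDensity (fun q => (ENNReal.ofReal (leastSupport Ω q))⁻¹) ≤
      μHE[Module.finrank ℝ E - 1].restrict (frontier Ω) := by
  set W := (coneMeasure Ω).withDensity fun q => (ENNReal.ofReal (leastSupport Ω q))⁻¹
  have hW : W.restrict (frontier Ω) = W := Measure.restrict_eq_self_of_ae_mem
    ((withDensity_absolutelyContinuous _ _).ae_le hΩ.ae_coneMeasure_mem_frontier)
  rw [← hW, ← Measure.restrict_smul]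
  refine hΩ.restrict_frontier_le_of_forall_normalCell (m := 2 * Module.finrank ℝ E) ?_
  intro K hK θ hθ hθK e h he A hAC hA
  have hK0 : 0 < K := one_pos.trans hK
  rcases A.eq_empty_or_nonempty with rfl | ⟨q, hq⟩
  · simp
  have hrh : r ≤ K * h := hΩ.le_mul_of_mem_normalCell hK0 hθ hθK (hAC hq)
  have hh : 0 < h := pos_of_mul_pos_right (hΩ.pos.trans_le hrh) K.coe_nonneg
  set n := Module.finrank ℝ E
  have hn : n + (n - 1) + 1 = 2 * n := by
    have : 0 < n := Module.finrank_pos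
    lia
  rw [Measure.smul_apply, smul_eq_mul]
  calc n * W A ≤ n * (K * (ENNReal.ofReal h)⁻¹ * coneMeasure Ω A) := by
        gcongr
        exact hΩ.withDensity_inv_leastSupport_le hK0 hθ hθK hh hA hAC
    _ = K * (ENNReal.ofReal h)⁻¹ * (n * coneMeasure Ω A) := by ring
    _ ≤ K * (ENNReal.ofReal h)⁻¹ * (K ^ (n + (n - 1)) * (ENNReal.ofReal h * μHE[n - 1] A)) := by
        gcongr K * (ENNReal.ofReal h)⁻¹ * ?_
        exact hΩ.finrank_mul_coneMeasure_le hK0 hθ hθK he hh hA hAC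
    _ = K * K ^ (n + (n - 1)) * (ENNReal.ofReal h * (ENNReal.ofReal h)⁻¹) * μHE[n - 1] A := by ring
    _ = K ^ (2 * n) * μHE[n - 1] A := by
        rw [ENNReal.mul_inv_cancel (by positivity) ENNReal.ofReal_ne_top, mul_one, ← hn,
          pow_succ' _ (n + (n - 1))]

end IsSandwiched

end ConeMeasure

section BoundaryIntegral

lemma exists_pos_forall_le_add_of_dist_le {α : Type*} [PseudoMetricSpace α] {f : α → ℝ}
    {s : Set α} {η : ℝ} (hs : IsCompact s) (hf : ContinuousOn f s) (hη : 0 < η) :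
    ∃ d > 0, ∀ x ∈ s, ∀ y ∈ s, dist x y ≤ d → f x ≤ f y + η := by
  obtain ⟨d, hd, hfd⟩ := Metric.uniformContinuousOn_iff_le.1
    (hs.uniformContinuousOn_of_continuous hf) η hη
  exact ⟨d, hd, fun x hx y hy hxy => by linarith [(abs_le.1 (hfd x hx y hy hxy)).2]⟩

lemma nonneg_on_closure {α : Type*} [TopologicalSpace α] {f : α → ℝ} {s : Set α}
    (hfc : ContinuousOn f (closure s)) (hf : ∀ x ∈ s, 0 ≤ f x) : ∀ x ∈ closure s, 0 ≤ f x := by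
  have hmaps : MapsTo f s (Ici 0) := hf
  simpa [MapsTo] using hmaps.closure_of_continuousOn hfc

lemma average_nnreal_smul_measure {α F : Type*} [MeasurableSpace α] [NormedAddCommGroup F]
    [NormedSpace ℝ F] (μ : Measure α) {c : ℝ≥0} (hc : c ≠ 0) (f : α → F) :
    ⨍ x, f x ∂(c • μ) = ⨍ x, f x ∂μ := by
  rw [average_eq, average_eq, integral_smul_nnreal_measure, measureReal_nnreal_smul_apply,
    NNReal.smul_def, smul_smul, mul_inv_rev, inv_mul_cancel_right₀ (NNReal.coe_ne_zero.2 hc)]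

variable {E : Type*} [NormedAddCommGroup E] [InnerProductSpace ℝ E] [FiniteDimensional ℝ E]
  [MeasurableSpace E] [BorelSpace E] {Ω : Set E} {r R : ℝ} {f : E → ℝ}

namespace IsSandwiched

variable [Nontrivial E]

lemma finrank_mul_setLIntegral_radialProj_le (hΩ : IsSandwiched Ω r R) {h : E → ℝ≥0∞}
    (hh : Measurable h) :
    Module.finrank ℝ E *
        ∫⁻ x in Ω, h (radialProj Ω x) / ENNReal.ofReal (leastSupport Ω (radialProj Ω x)) ≤
      ∫⁻ q in frontier Ω, h q ∂μHE[Module.finrank ℝ E - 1] := by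
  have hN : Measurable fun q => (ENNReal.ofReal (leastSupport Ω q))⁻¹ :=
    (measurable_leastSupport Ω).ennreal_ofReal.inv
  calc Module.finrank ℝ E *
        ∫⁻ x in Ω, h (radialProj Ω x) / ENNReal.ofReal (leastSupport Ω (radialProj Ω x))
      = ∫⁻ q, h q ∂(Module.finrank ℝ E : ℝ≥0∞) •
          (coneMeasure Ω).withDensity (fun q => (ENNReal.ofReal (leastSupport Ω q))⁻¹) := by
        rw [lintegral_smul_measure, smul_eq_mul, lintegral_withDensity_eq_lintegral_mul _ hN hh,
          coneMeasure, lintegral_map (hN.mul hh) hΩ.measurable_radialProj]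
        simp only [Pi.mul_apply, ENNReal.div_eq_inv_mul]
    _ ≤ _ := lintegral_mono' hΩ.finrank_smul_withDensity_le le_rfl

lemma ofReal_mul_measure_frontier_le (hΩ : IsSandwiched Ω r R) :
    ENNReal.ofReal r * μHE[Module.finrank ℝ E - 1] (frontier Ω) ≤
      Module.finrank ℝ E * volume Ω := by
  simpa [coneMeasure, Measure.map_apply hΩ.measurable_radialProj MeasurableSet.univ] using
    hΩ.ofReal_smul_restrict_frontier_le univ

lemma measure_frontier_ne_top (hΩ : IsSandwiched Ω r R) :
    μHE[Module.finrank ℝ E - 1] (frontier Ω) ≠ ⊤ := by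
  intro htop
  have hle := hΩ.ofReal_mul_measure_frontier_le
  rw [htop, ENNReal.mul_top (by simpa using hΩ.pos)] at hle
  exact (ENNReal.mul_lt_top (ENNReal.natCast_lt_top _) hΩ.isBounded.measure_lt_top).not_ge hle

lemma setLIntegral_le_ofReal_mul_setLIntegral_add (hΩ : IsSandwiched Ω r R)
    (hfc : ContinuousOn f (closure Ω)) {η : ℝ} (hη : 0 < η)
    (hshell : ∀ ε > 0, ∫⁻ x in Ω, ENNReal.ofReal (f x) ≤
      ENNReal.ofReal (1 + r / ε) *
        ∫⁻ x in Ω ∩ {x | infDist x Ωᶜ < ε}, ENNReal.ofReal (f x)) :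
    ∫⁻ x in Ω, ENNReal.ofReal (f x) ≤ ENNReal.ofReal r *
      ∫⁻ q in frontier Ω, ENNReal.ofReal (f q + η) ∂μHE[Module.finrank ℝ E - 1] := by
  have hcont : ContinuousOn (fun q => ENNReal.ofReal (f q + η)) (frontier Ω) :=
    ENNReal.continuous_ofReal.comp_continuousOn
      ((hfc.mono frontier_subset_closure).add continuousOn_const)
  set h := (frontier Ω).indicator fun q => ENNReal.ofReal (f q + η)
  have hh : Measurable h := by
    classical
    simp only [h, ← piecewise_eq_indicator]
    exact hcont.measurable_piecewise continuousOn_const isClosed_frontier.measurableSet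
  have hhf : EqOn h (fun q => ENNReal.ofReal (f q + η)) (frontier Ω) := eqOn_indicator
  obtain ⟨B, hB⟩ := hΩ.isCompact_frontier.exists_bound_of_continuousOn
    (hfc.mono frontier_subset_closure)
  obtain ⟨d, hd, hfd⟩ :=
    exists_pos_forall_le_add_of_dist_le hΩ.isBounded.isCompact_closure hfc hη
  calc ∫⁻ x in Ω, ENNReal.ofReal (f x)
      ≤ Module.finrank ℝ E * ENNReal.ofReal r *
          ∫⁻ x in Ω, h (radialProj Ω x) / ENNReal.ofReal (leastSupport Ω (radialProj Ω x)) := by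
        refine hΩ.setLIntegral_le_of_le_setLIntegral_infDist_lt volume hh
          (C := ENNReal.ofReal (B + η)) ENNReal.ofReal_ne_top (fun q hq => ?_) hd
          (fun x hx q hq hxq => ?_) hshell
        · rw [hhf hq]
          exact ENNReal.ofReal_le_ofReal (by linarith [le_of_abs_le (hB q hq)])
        · rw [hhf hq]
          exact ENNReal.ofReal_le_ofReal
            (hfd x (subset_closure hx) q (frontier_subset_closure hq) hxq)
    _ ≤ ENNReal.ofReal r * ∫⁻ q in frontier Ω, h q ∂μHE[Module.finrank ℝ E - 1] := by
        rw [mul_comm (Module.finrank ℝ E : ℝ≥0∞), mul_assoc]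
        gcongr
        exact hΩ.finrank_mul_setLIntegral_radialProj_le hh
    _ = _ := by rw [setLIntegral_congr_fun isClosed_frontier.measurableSet hhf]

lemma setLIntegral_le_ofReal_mul_setLIntegral (hΩ : IsSandwiched Ω r R)
    (hfc : ContinuousOn f (closure Ω))
    (hshell : ∀ ε > 0, ∫⁻ x in Ω, ENNReal.ofReal (f x) ≤
      ENNReal.ofReal (1 + r / ε) *
        ∫⁻ x in Ω ∩ {x | infDist x Ωᶜ < ε}, ENNReal.ofReal (f x)) :
    ∫⁻ x in Ω, ENNReal.ofReal (f x) ≤ ENNReal.ofReal r *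
      ∫⁻ q in frontier Ω, ENNReal.ofReal (f q) ∂μHE[Module.finrank ℝ E - 1] := by
  set σ := (μHE[Module.finrank ℝ E - 1] : Measure E)
  set J := ∫⁻ q in frontier Ω, ENNReal.ofReal (f q) ∂σ
  have hlim : Tendsto (fun η : ℝ => ENNReal.ofReal r * (J + ENNReal.ofReal η * σ (frontier Ω)))
      (𝓝[>] 0) (𝓝 (ENNReal.ofReal r * J)) := by
    refine ENNReal.Tendsto.const_mul ?_ (Or.inr ENNReal.ofReal_ne_top)
    have hη : Tendsto (fun η : ℝ => ENNReal.ofReal η) (𝓝[>] 0) (𝓝 0) := by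
      simpa using (ENNReal.continuous_ofReal.tendsto 0).mono_left nhdsWithin_le_nhds
    simpa using (ENNReal.Tendsto.mul_const hη (Or.inr hΩ.measure_frontier_ne_top)).const_add J
  refine ge_of_tendsto hlim (eventually_nhdsWithin_of_forall fun η hη => ?_)
  refine (hΩ.setLIntegral_le_ofReal_mul_setLIntegral_add hfc hη hshell).trans ?_
  gcongr
  rw [← setLIntegral_const, ← lintegral_add_right _ measurable_const]
  exact lintegral_mono fun q => ENNReal.ofReal_add_le

lemma setIntegral_le_mul_setIntegral (hΩ : IsSandwiched Ω r R) (hfc : ContinuousOn f (closure Ω))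
    (hf0 : ∀ x ∈ Ω, 0 ≤ f x)
    (hshell : ∀ ε > 0, ∫ x in Ω, f x ≤ (1 + r / ε) * ∫ x in Ω ∩ {x | infDist x Ωᶜ < ε}, f x) :
    ∫ x in Ω, f x ≤ r * ∫ q in frontier Ω, f q ∂μHE[Module.finrank ℝ E - 1] := by
  have hr := hΩ.pos
  have hfi : IntegrableOn f Ω :=
    (hfc.integrableOn_compact hΩ.isBounded.isCompact_closure).mono_set subset_closure
  have hfσ : IntegrableOn f (frontier Ω) μHE[Module.finrank ℝ E - 1] :=
    (hfc.mono frontier_subset_closure).integrableOn_of_subset_isCompact hΩ.isCompact_frontier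
      isClosed_frontier.measurableSet subset_rfl hΩ.measure_frontier_ne_top
  have hf0Ω : 0 ≤ᵐ[volume.restrict Ω] f :=
    ae_restrict_of_forall_mem hΩ.isOpen.measurableSet hf0
  have hf0σ : 0 ≤ᵐ[μHE[Module.finrank ℝ E - 1].restrict (frontier Ω)] f :=
    ae_restrict_of_forall_mem isClosed_frontier.measurableSet fun q hq =>
      nonneg_on_closure hfc hf0 q (frontier_subset_closure hq)
  have hlintegral := hΩ.setLIntegral_le_ofReal_mul_setLIntegral hfc fun ε hε => by
    rw [← ofReal_integral_eq_lintegral_ofReal hfi hf0Ω,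
      ← ofReal_integral_eq_lintegral_ofReal (hfi.mono_set inter_subset_left)
        (ae_restrict_of_ae_restrict_of_subset inter_subset_left hf0Ω),
      ← ENNReal.ofReal_mul (by positivity)]
    exact ENNReal.ofReal_le_ofReal (hshell ε hε)
  rw [← ofReal_integral_eq_lintegral_ofReal hfi hf0Ω,
    ← ofReal_integral_eq_lintegral_ofReal hfσ hf0σ, ← ENNReal.ofReal_mul hr.le] at hlintegral
  exact (ENNReal.ofReal_le_ofReal_iff (mul_nonneg hr.le (integral_nonneg_of_ae hf0σ))).1 hlintegral

lemma mul_measureReal_frontier_le (hΩ : IsSandwiched Ω r R) :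
    r * μHE[Module.finrank ℝ E - 1].real (frontier Ω) ≤ Module.finrank ℝ E * volume.real Ω := by
  have hV : volume Ω ≠ ⊤ := hΩ.isBounded.measure_lt_top.ne
  have hle := ENNReal.toReal_mono (by finiteness) hΩ.ofReal_mul_measure_frontier_le
  simpa [measureReal_def, hΩ.pos.le] using hle

lemma setAverage_le_finrank_mul_setAverage_frontier (hΩ : IsSandwiched Ω r R)
    (hfc : ContinuousOn f (closure Ω)) (hf0 : ∀ x ∈ Ω, 0 ≤ f x)
    (hshell : ∀ ε > 0, ∫ x in Ω, f x ≤ (1 + r / ε) * ∫ x in Ω ∩ {x | infDist x Ωᶜ < ε}, f x) :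
    ⨍ x in Ω, f x ≤
      Module.finrank ℝ E * ⨍ q in frontier Ω, f q ∂μHE[Module.finrank ℝ E - 1] := by
  have hV : 0 < volume.real Ω := ENNReal.toReal_pos
    (hΩ.isOpen.measure_pos volume ⟨0, hΩ.zero_mem⟩).ne' hΩ.isBounded.measure_lt_top.ne
  have hmean : 0 ≤ ⨍ q in frontier Ω, f q ∂μHE[Module.finrank ℝ E - 1] := by
    rw [setAverage_eq]
    exact smul_nonneg (by positivity) (setIntegral_nonneg isClosed_frontier.measurableSet
      fun q hq => nonneg_on_closure hfc hf0 q (frontier_subset_closure hq))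
  rw [setAverage_eq, smul_eq_mul, inv_mul_le_iff₀ hV]
  calc ∫ x in Ω, f x ≤ r * ∫ q in frontier Ω, f q ∂μHE[Module.finrank ℝ E - 1] :=
        hΩ.setIntegral_le_mul_setIntegral hfc hf0 hshell
    _ = r * μHE[Module.finrank ℝ E - 1].real (frontier Ω) *
          ⨍ q in frontier Ω, f q ∂μHE[Module.finrank ℝ E - 1] := by
        rw [← measure_smul_setAverage f hΩ.measure_frontier_ne_top, smul_eq_mul, mul_assoc]
    _ ≤ Module.finrank ℝ E * volume.real Ω *
          ⨍ q in frontier Ω, f q ∂μHE[Module.finrank ℝ E - 1] := by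
        gcongr ?_ * _
        exact hΩ.mul_measureReal_frontier_le
    _ = _ := by ring

end IsSandwiched

end BoundaryIntegral

section SubharmonicAverage

variable {n : ℕ} {Ω : Set (EuclideanSpace ℝ (Fin n))} {f : EuclideanSpace ℝ (Fin n) → ℝ}

lemma nontrivial_euclideanSpace (hn : 0 < n) : Nontrivial (EuclideanSpace ℝ (Fin n)) :=
  Module.nontrivial_of_finrank_pos (R := ℝ) (by rwa [finrank_euclideanSpace_fin])

lemma IsSandwiched.setAverage_le {r R : ℝ} (hΩ : IsSandwiched Ω r R)
    (hr : ∀ x, infDist x Ωᶜ ≤ r) (hn : 0 < n) (hfc : ContinuousOn f (closure Ω))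
    (hf0 : ∀ x ∈ Ω, 0 ≤ f x) (hf : IsSubharmonicOn f Ω) :
    ⨍ x in Ω, f x ≤ n * ⨍ x in frontier Ω, f x ∂μHE[n - 1] := by
  have := nontrivial_euclideanSpace hn
  have hfi : IntegrableOn f Ω :=
    (hfc.integrableOn_compact hΩ.isBounded.isCompact_closure).mono_set subset_closure
  simpa only [finrank_euclideanSpace_fin] using
    hΩ.setAverage_le_finrank_mul_setAverage_frontier hfc hf0 fun ε hε =>
      setIntegral_le_one_add_div_mul_setIntegral_shell hn hΩ.isOpen hΩ.convex ⟨0, hΩ.zero_mem⟩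
        hΩ.compl_nonempty hfi (hfc.mono subset_closure) hf0 hf hr hε

lemma setAverage_preimage_add_left {E F : Type*} [NormedAddCommGroup E] [MeasurableSpace E]
    [BorelSpace E] [NormedAddCommGroup F] [NormedSpace ℝ F] (μ : Measure E)
    [μ.IsAddLeftInvariant] (x₀ : E) (g : E → F) (s : Set E) :
    ⨍ y in (x₀ + ·) ⁻¹' s, g (x₀ + y) ∂μ = ⨍ x in s, g x ∂μ := by
  have hmp := measurePreserving_add_left μ x₀
  have hemb : MeasurableEmbedding (x₀ + ·) := (MeasurableEquiv.addLeft x₀).measurableEmbedding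
  rw [setAverage_eq, setAverage_eq, hmp.setIntegral_preimage_emb hemb,
    measureReal_def, hmp.measure_preimage_emb hemb, measureReal_def]

lemma infDist_preimage_add_left {E : Type*} [SeminormedAddCommGroup E] (x₀ y : E) (s : Set E) :
    infDist y ((x₀ + ·) ⁻¹' s) = infDist (x₀ + y) s := by
  rw [← infDist_image (isometry_add_left x₀),
    image_preimage_eq _ (AddGroup.addLeft_bijective x₀).surjective]

lemma setAverage_le_mul_setAverage_frontier (hn : 0 < n) (hΩo : IsOpen Ω)
    (hΩb : Bornology.IsBounded Ω) (hΩc : Convex ℝ Ω) (hΩne : Ω.Nonempty)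
    (hfc : ContinuousOn f (closure Ω)) (hf0 : ∀ x ∈ Ω, 0 ≤ f x) (hf : IsSubharmonicOn f Ω) :
    ⨍ x in Ω, f x ≤ n * ⨍ x in frontier Ω, f x ∂μHE[n - 1] := by
  have := nontrivial_euclideanSpace hn
  obtain ⟨x₀, hr, hmax⟩ :=
    exists_isMax_infDist_compl hΩo hΩb hΩne (compl_nonempty_of_isBounded hΩb)
  obtain ⟨R, hΩ⟩ :=
    exists_isSandwiched_preimage_add_left hΩo hΩc hΩb hr ball_infDist_compl_subset
  have hclosure : closure ((x₀ + ·) ⁻¹' Ω) = (x₀ + ·) ⁻¹' closure Ω :=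
    ((Homeomorph.addLeft x₀).preimage_closure Ω).symm
  have hfrontier : frontier ((x₀ + ·) ⁻¹' Ω) = (x₀ + ·) ⁻¹' frontier Ω :=
    ((Homeomorph.addLeft x₀).preimage_frontier Ω).symm
  have hle := hΩ.setAverage_le (f := fun y => f (x₀ + y))
    (fun y => by rw [← preimage_compl, infDist_preimage_add_left]; exact hmax _) hn
    (hfc.comp (continuous_const_add x₀).continuousOn hclosure.le) (fun y hy => hf0 _ hy)
    (by simpa only [one_smul] using hf.comp_add_smul x₀ 1)
  rwa [hfrontier, setAverage_preimage_add_left, setAverage_preimage_add_left] at hle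

lemma setAverage_euclideanHausdorffMeasure (d : ℕ) {X : Type*} [MetricSpace X] [MeasurableSpace X]
    [BorelSpace X] (g : X → ℝ) (s : Set X) :
    ⨍ x in s, g x ∂μHE[d] = ⨍ x in s, g x ∂μH[d] := by
  rw [Measure.euclideanHausdorffMeasure_def, Measure.restrict_smul]
  exact average_nnreal_smul_measure _
    (Measure.addHaarScalarFactor_volume_hausdorffMeasure_ne_zero d) g

end SubharmonicAverage

end HermiteHadamard

open HermiteHadamard in
theorem hermite_hadamard_subharmonic_odd_general
    (n : ℕ) (hn : 0 < n)
    (Ω : Set (EuclideanSpace ℝ (Fin n)))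
    (hΩo : IsOpen Ω) (hΩb : Bornology.IsBounded Ω)
    (hΩc : Convex ℝ Ω) (hΩne : Ω.Nonempty)
    (f : EuclideanSpace ℝ (Fin n) → ℝ)
    (hfc : ContinuousOn f (closure Ω))
    (hf0 : ∀ x ∈ Ω, 0 ≤ f x)
    (hf1 : ∀ x ∈ Ω, DifferentiableAt ℝ f x)
    (hf2 : ∀ x ∈ Ω, DifferentiableAt ℝ (fun y => fderiv ℝ f y) x)
    (hsub : ∀ x ∈ Ω, 0 ≤ laplacian f x) :
    (1 / (volume Ω).toReal) * ∫ x in Ω, f x ≤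
      ((n : ℝ) / (μH[(n : ℝ) - 1] (frontier Ω)).toReal) *
        ∫ x in frontier Ω, f x ∂μH[(n : ℝ) - 1] := by
  have hf : IsSubharmonicOn f Ω :=
    ⟨fun x hx => ⟨Filter.mem_of_superset (hΩo.mem_nhds hx) hf1, hf2 x hx⟩, hsub⟩
  have hle := setAverage_le_mul_setAverage_frontier hn hΩo hΩb hΩc hΩne hfc hf0 hf
  rw [setAverage_euclideanHausdorffMeasure, setAverage_eq, setAverage_eq, Nat.cast_pred hn] at hle
  rwa [one_div, div_mul_eq_mul_div, mul_div_assoc, div_eq_inv_mul]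

/-- Hermite–Hadamard inequality for positive subharmonic functions on convex domains,
odd-dimensional case, with constant `n^(3/2)`. -/
theorem hermite_hadamard_subharmonic_odd
    (n : ℕ) (hn : Odd n)
    (Ω : Set (EuclideanSpace ℝ (Fin n)))
    (hΩo : IsOpen Ω) (hΩb : Bornology.IsBounded Ω)
    (hΩc : Convex ℝ Ω) (hΩne : (interior Ω).Nonempty)
    (f : EuclideanSpace ℝ (Fin n) → ℝ)
    (hfc : ContinuousOn f (closure Ω))
    (hfpos : ∀ x ∈ Ω, 0 < f x)
    (hf1 : ∀ x ∈ Ω, DifferentiableAt ℝ f x)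
    (hf2 : ∀ x ∈ Ω, DifferentiableAt ℝ (fun y => fderiv ℝ f y) x)
    (hsub : ∀ x ∈ Ω, 0 ≤ laplacian f x) :
    (1 / (volume Ω).toReal) * ∫ x in Ω, f x ≤
      ((n : ℝ) ^ (3 / 2 : ℝ) / (μH[(n : ℝ) - 1] (frontier Ω)).toReal) *
        ∫ x in frontier Ω, f x ∂μH[(n : ℝ) - 1] := by
  have hf0 : ∀ x ∈ Ω, 0 ≤ f x := fun x hx => (hfpos x hx).le
  refine (hermite_hadamard_subharmonic_odd_general n hn.pos Ω hΩo hΩb hΩc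
    (hΩne.mono interior_subset) f hfc hf0 hf1 hf2 hsub).trans ?_
  gcongr
  · exact setIntegral_nonneg isClosed_frontier.measurableSet fun x hx =>
      HermiteHadamard.nonneg_on_closure hfc hf0 x (frontier_subset_closure hx)
  · exact Real.self_le_rpow_of_one_le (mod_cast hn.pos) (by norm_num)
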